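/- Let A be a finitely generated commutative unital ℝ-algebra, let f₁,…,f_k ∈ A, let T be the preordering of A generated by f₁,…,f_k, and let h₁,…,h_m ∈ A be bounded on K(T) (there is a constant C with |χ(h_j)| ≤ C for all χ ∈ K(T) and all j). For λ ∈ ℝ^m let I_λ denote the ideal of A generated by h₁−λ₁·1, …, h_m−λ_m·1. Suppose that for every λ ∈ h(K(T)) there exist a finitely generated commutative unital ℝ-algebra B_λ such that every linear functional on B_λ that is nonnegative on all squares is a moment functional on the character space of B_λ, together with a surjective unital ℝ-algebra homomorphism ρ_λ : B_λ → A/I_λ. Then every T-positive linear functional on A is a moment functional on Â. -/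

import Mathlib

/-- The preordering of a commutative ring generated by a set `S`:
the smallest subset containing all squares and `S`, closed under addition
and multiplication. -/
inductive IsInPreordering {A : Type*} [CommRing A] (S : Set A) : A → Prop
  | sq (a : A) : IsInPreordering S (a ^ 2)
  | gen {a : A} : a ∈ S → IsInPreordering S a
  | add {a b : A} : IsInPreordering S a → IsInPreordering S b → IsInPreordering S (a + b)
  | mul {a b : A} : IsInPreordering S a → IsInPreordering S b → IsInPreordering S (a * b)

/-- The positivity set `K(T)` of the preordering generated by `S`, inside the
character space `A →ₐ[ℝ] ℝ`. -/
def KSet {A : Type*} [CommRing A] [Algebra ℝ A] (S : Set A) : Set (A →ₐ[ℝ] ℝ) :=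
  {χ | ∀ a : A, IsInPreordering S a → 0 ≤ χ a}

/-- The character space carries the topology of pointwise convergence. -/
noncomputable instance charTop (A : Type*) [CommRing A] [Algebra ℝ A] :
    TopologicalSpace (A →ₐ[ℝ] ℝ) :=
  TopologicalSpace.induced (fun χ (a : A) => χ a) Pi.topologicalSpace

/-- The Borel σ-algebra on the character space. -/
noncomputable instance charMeas (A : Type*) [CommRing A] [Algebra ℝ A] :
    MeasurableSpace (A →ₐ[ℝ] ℝ) := borel _

/-- `L` is a moment functional: it is given by integration against a positive
Borel measure on the character space. -/
def IsMomentFunctional {A : Type*} [CommRing A] [Algebra ℝ A] (L : A →ₗ[ℝ] ℝ) : Prop :=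
  ∃ μ : MeasureTheory.Measure (A →ₐ[ℝ] ℝ),
    ∀ a : A, MeasureTheory.Integrable (fun χ : A →ₐ[ℝ] ℝ => χ a) μ ∧ L a = ∫ χ : A →ₐ[ℝ] ℝ, χ a ∂μ

/-- A finitely generated commutative real unital algebra on which every linear
functional that is nonnegative on all squares is a moment functional. -/
structure MPAlgebra where
  carrier : Type
  [isRing : CommRing carrier]
  [isAlgebra : Algebra ℝ carrier]
  fg : Algebra.FiniteType ℝ carrier
  mp : ∀ L : carrier →ₗ[ℝ] ℝ, (∀ b : carrier, 0 ≤ L (b ^ 2)) → IsMomentFunctional L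

attribute [instance] MPAlgebra.isRing MPAlgebra.isAlgebra

section

/-- A proper preordering of a commutative ring, as a predicate on sets. -/
def PreOrd {B : Type*} [CommRing B] (T : Set B) : Prop :=
  (∀ a ∈ T, ∀ b ∈ T, a + b ∈ T) ∧ (∀ a ∈ T, ∀ b ∈ T, a * b ∈ T) ∧ (∀ a, a * a ∈ T) ∧ (-1 : B) ∉ T

theorem PreOrd.zero_mem {B : Type*} [CommRing B] {T : Set B} (h : PreOrd T) : (0 : B) ∈ T := by
  simpa using h.2.2.1 0

theorem PreOrd.one_mem {B : Type*} [CommRing B] {T : Set B} (h : PreOrd T) : (1 : B) ∈ T := by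
  simpa using h.2.2.1 1

theorem PreOrd.exists_max {B : Type*} [CommRing B] {T : Set B} (hT : PreOrd T) :
    ∃ P : Set B, T ⊆ P ∧ PreOrd P ∧ ∀ a ∉ P, ∃ x ∈ P, ∃ y ∈ P, -1 = x + y * a := by
  obtain ⟨P, hTP, hP⟩ := zorn_subset_nonempty {P : Set B | PreOrd P} (by
    intro c hc hchain hne
    refine ⟨⋃₀ c, ⟨?_, ?_, ?_, ?_⟩, fun s hs => Set.subset_sUnion_of_mem hs⟩
    · rintro a ⟨s, hs, has⟩ b ⟨t, ht, hbt⟩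
      rcases hchain.total hs ht with h | h
      · exact ⟨t, ht, (hc ht).1 a (h has) b hbt⟩
      · exact ⟨s, hs, (hc hs).1 a has b (h hbt)⟩
    · rintro a ⟨s, hs, has⟩ b ⟨t, ht, hbt⟩
      rcases hchain.total hs ht with h | h
      · exact ⟨t, ht, (hc ht).2.1 a (h has) b hbt⟩
      · exact ⟨s, hs, (hc hs).2.1 a has b (h hbt)⟩
    · intro a
      obtain ⟨s, hs⟩ := hne
      exact ⟨s, hs, (hc hs).2.2.1 a⟩
    · rintro ⟨s, hs, h⟩
      exact (hc hs).2.2.2 h) T hT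
  refine ⟨P, hTP, hP.prop, fun a ha => ?_⟩
  by_contra hcon
  push Not at hcon
  have hPP : PreOrd P := hP.prop
  have h1 : PreOrd {z | ∃ x ∈ P, ∃ y ∈ P, z = x + y * a} := by
    refine ⟨?_, ?_, ?_, ?_⟩
    · rintro _ ⟨x, hx, y, hy, rfl⟩ _ ⟨x', hx', y', hy', rfl⟩
      exact ⟨x + x', hPP.1 _ hx _ hx', y + y', hPP.1 _ hy _ hy', by ring⟩
    · rintro _ ⟨x, hx, y, hy, rfl⟩ _ ⟨x', hx', y', hy', rfl⟩
      refine ⟨x * x' + (y * y') * (a * a), ?_, x * y' + x' * y, ?_, by ring⟩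
      · exact hPP.1 _ (hPP.2.1 _ hx _ hx') _ (hPP.2.1 _ (hPP.2.1 _ hy _ hy') _ (hPP.2.2.1 a))
      · exact hPP.1 _ (hPP.2.1 _ hx _ hy') _ (hPP.2.1 _ hx' _ hy)
    · intro b
      exact ⟨b * b, hPP.2.2.1 b, 0, hPP.zero_mem, by ring⟩
    · rintro ⟨x, hx, y, hy, h⟩
      exact hcon x hx y hy h
  have h2 : P ⊆ {z | ∃ x ∈ P, ∃ y ∈ P, z = x + y * a} := fun x hx =>
    ⟨x, hx, 0, hPP.zero_mem, by ring⟩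
  exact ha (hP.le_of_ge h1 h2 ⟨0, hPP.zero_mem, 1, hPP.one_mem, by ring⟩)

theorem PreOrd.exists_total {B : Type*} [CommRing B] {T : Set B} (hT : PreOrd T) :
    ∃ P : Set B, T ⊆ P ∧ PreOrd P ∧ (∀ a, a ∈ P ∨ -a ∈ P) ∧
      (∀ a b, a * b ∈ P → -(a * b) ∈ P → (a ∈ P ∧ -a ∈ P) ∨ (b ∈ P ∧ -b ∈ P)) := by
  obtain ⟨P, hTP, hP, hmax⟩ := hT.exists_max
  have hadd := hP.1
  have hmul := hP.2.1
  have hsq := hP.2.2.1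
  have htot : ∀ a, a ∈ P ∨ -a ∈ P := by
    intro a
    by_contra hcon
    push Not at hcon
    obtain ⟨x, hx, y, hy, h1⟩ := hmax a hcon.1
    obtain ⟨z, hz, w, hw, h2⟩ := hmax (-a) hcon.2
    apply hP.2.2.2
    have : (-1 : B) = (y * w) * (a * a) + (x + z + x * z) := by
      have e1 : y * a = -1 - x := by rw [h1]; ring
      have e2 : w * a = 1 + z := by linear_combination h2
      have : (y * w) * (a * a) = (y * a) * (w * a) := by ring
      rw [this, e1, e2]; ring
    rw [this]
    exact hadd _ (hmul _ (hmul _ hy _ hw) _ (hsq a)) _ (hadd _ (hadd _ hx _ hz) _ (hmul _ hx _ hz))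
  have hid : ∀ c x, c ∈ P → -c ∈ P → c * x ∈ P ∧ -(c * x) ∈ P := by
    intro c x h1 h2
    rcases htot x with h | h
    · exact ⟨hmul _ h1 _ h, by simpa using hmul _ h2 _ h⟩
    · exact ⟨by simpa using hmul _ h2 _ h, by simpa using hmul _ h1 _ h⟩
  -- radical
  have hrad0 : ∀ b, b ∉ P → -(b * b) ∉ P := by
    intro b hb hbb
    obtain ⟨x, hx, y, hy, h1⟩ := hmax b hb
    apply hP.2.2.2
    have h3 := hid (b * b) (y * y) (hsq b) hbb
    have : (-1 : B) = x + x + x * x + -(b * b * (y * y)) := by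
      have e1 : y * b = -1 - x := by rw [h1]; ring
      have : b * b * (y * y) = (y * b) * (y * b) := by ring
      rw [this, e1]; ring
    rw [this]
    exact hadd _ (hadd _ (hadd _ hx _ hx) _ (hsq x)) _ h3.2
  have hrad : ∀ b, -(b * b) ∈ P → b ∈ P ∧ -b ∈ P := by
    intro b hb
    refine ⟨by_contra fun h => hrad0 b h hb, by_contra fun h => hrad0 (-b) h (by simpa using hb)⟩
  have key : ∀ a b, a * b ∈ P → -(a * b) ∈ P → a ∉ P → b ∈ P ∧ -b ∈ P := by
    intro a b h1 h2 ha
    obtain ⟨x, hx, y, hy, h3⟩ := hmax a ha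
    apply hrad
    have h4 := hid (a * b) (y * b) h1 h2
    have : -(b * b) = x * (b * b) + a * b * (y * b) := by
      linear_combination (b * b) * h3
    rw [this]
    exact hadd _ (hmul _ hx _ (hsq b)) _ h4.1
  refine ⟨P, hTP, hP, htot, fun a b h1 h2 => ?_⟩
  by_cases ha : a ∈ P
  · by_cases ha' : -a ∈ P
    · exact Or.inl ⟨ha, ha'⟩
    · exact Or.inr (key (-a) b (by simpa using h2) (by simpa using h1) ha')
  · exact Or.inr (key a b h1 h2 ha)

end

section

set_option linter.style.haveILetI false
open Polynomial

/-- The intermediate value property for polynomials over an ordered field. -/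
def PolyIVP (R : Type*) [Field R] [LinearOrder R] : Prop :=
  ∀ (p : R[X]) (a b : R), a < b → p.eval a < 0 → 0 < p.eval b → ∃ c, a < c ∧ c < b ∧ p.eval c = 0

/-- The nonnegative cone of an ordered subfield of a field. -/
structure FCone {Ω : Type*} [Field Ω] (Q : Set Ω) : Prop where
  add : ∀ a ∈ Q, ∀ b ∈ Q, a + b ∈ Q
  mul : ∀ a ∈ Q, ∀ b ∈ Q, a * b ∈ Q
  sub : ∀ a ∈ Q, ∀ b ∈ Q, a - b ∈ Q ∨ b - a ∈ Q
  inv : ∀ a ∈ Q, a⁻¹ ∈ Q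
  one : (1 : Ω) ∈ Q
  neg_one : (-1 : Ω) ∉ Q

namespace FCone
variable {Ω : Type*} [Field Ω] {Q : Set Ω}

theorem zero (h : FCone Q) : (0 : Ω) ∈ Q := by
  rcases h.sub 1 h.one 1 h.one with h | h <;> simpa using h

theorem eq_zero (h : FCone Q) {x : Ω} (h1 : x ∈ Q) (h2 : -x ∈ Q) : x = 0 := by
  by_contra hx
  apply h.neg_one
  have := h.mul _ h2 _ (h.inv _ h1)
  rwa [neg_mul, mul_inv_cancel₀ hx] at this

/-- The ordered subfield with nonnegative cone `Q`. -/
def field (h : FCone Q) : Subfield Ω where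
  carrier := {x | x ∈ Q ∨ -x ∈ Q}
  mul_mem' := by
    rintro a b (ha | ha) (hb | hb)
    · exact Or.inl (h.mul _ ha _ hb)
    · exact Or.inr (by simpa using h.mul _ ha _ hb)
    · exact Or.inr (by simpa using h.mul _ ha _ hb)
    · exact Or.inl (by simpa using h.mul _ ha _ hb)
  one_mem' := Or.inl h.one
  add_mem' := by
    rintro a b (ha | ha) (hb | hb)
    · exact Or.inl (h.add _ ha _ hb)
    · rcases h.sub _ ha _ hb with h | h
      · exact Or.inl (by simpa using h)
      · right; convert h using 1; ring
    · rcases h.sub _ ha _ hb with h | h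
      · right; convert h using 1; ring
      · left; convert h using 1; ring
    · right; have := h.add _ ha _ hb; convert this using 1; ring
  zero_mem' := Or.inl h.zero
  neg_mem' := by
    rintro a (ha | ha)
    · exact Or.inr (by simpa using ha)
    · exact Or.inl ha
  inv_mem' := by
    rintro a (ha | ha)
    · exact Or.inl (h.inv _ ha)
    · right; have := h.inv _ ha; rwa [inv_neg] at this

theorem mem_field (h : FCone Q) (x : Ω) : x ∈ h.field ↔ x ∈ Q ∨ -x ∈ Q := Iff.rfl

open Classical in
/-- The linear order on the subfield. -/
@[reducible] noncomputable def lin (h : FCone Q) : LinearOrder h.field where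
  le x y := (y : Ω) - x ∈ Q
  le_refl x := by simpa using h.zero
  le_trans x y z h1 h2 := by
    have := h.add _ h1 _ h2
    change (z : Ω) - x ∈ Q
    convert this using 1; ring
  le_antisymm x y h1 h2 := by
    have := h.eq_zero h1 (by simpa using h2)
    exact Subtype.ext (sub_eq_zero.1 this).symm
  le_total x y := by
    have := (h.field.sub_mem y.2 x.2)
    rw [mem_field] at this
    simpa using this
  toDecidableLE := Classical.decRel _

theorem ord (h : FCone Q) : letI := h.lin; IsStrictOrderedRing h.field := by
  letI := h.lin
  have hle : ∀ x y : h.field, x ≤ y ↔ (y : Ω) - x ∈ Q := fun _ _ => Iff.rfl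
  have : IsOrderedAddMonoid h.field := ⟨fun a b hab c => by
    rw [hle] at hab ⊢
    convert hab using 1
    push_cast; ring, fun a b hab c => by
    rw [hle] at hab ⊢
    convert hab using 1
    push_cast; ring⟩
  have : ZeroLEOneClass h.field := ⟨by rw [hle]; simpa using h.one⟩
  refine IsStrictOrderedRing.of_mul_pos fun a b ha hb => ?_
  have h1 := (hle _ _).1 ha.le
  have h2 := (hle _ _).1 hb.le
  refine lt_of_le_of_ne ?_ (mul_ne_zero ha.ne' hb.ne').symm
  rw [hle]
  simpa using h.mul _ h1 _ h2

theorem nonneg_iff (h : FCone Q) (x : h.field) : letI := h.lin; 0 ≤ x ↔ (x : Ω) ∈ Q := by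
  letI := h.lin
  have hle : ∀ x y : h.field, x ≤ y ↔ (y : Ω) - x ∈ Q := fun _ _ => Iff.rfl
  rw [hle]; simp

end FCone

/-- Key step: an irreducible polynomial that changes sign gives an ordered extension. -/
theorem preOrd_adjoinRoot {K : Type*} [Field K] [LinearOrder K] [IsStrictOrderedRing K]
    (p : K[X]) (hp : Irreducible p) (a b : K) (hab : a < b) (hpa : p.eval a < 0) (hpb : 0 < p.eval b)
    (ih : ∀ g : K[X], g.natDegree < p.natDegree → g.eval a < 0 → 0 < g.eval b → ∃ c, g.eval c = 0) :
    PreOrd {x : AdjoinRoot p | ∃ s ∈ AddSubmonoid.closure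
      {z : AdjoinRoot p | ∃ c : K, 0 ≤ c ∧ ∃ y, z = AdjoinRoot.of p c * (y * y)}, x = s} := by
  simp only [exists_eq_right']
  have hp0 : p ≠ 0 := hp.ne_zero
  set G := {z : AdjoinRoot p | ∃ c : K, 0 ≤ c ∧ ∃ y, z = AdjoinRoot.of p c * (y * y)} with hG
  have hpd : 0 < p.natDegree := hp.natDegree_pos
  have hrep : ∀ x ∈ AddSubmonoid.closure G, ∃ s : K[X], s.natDegree ≤ 2 * (p.natDegree - 1) ∧
      (∀ z, 0 ≤ s.eval z) ∧ x = AdjoinRoot.mk p s := by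
    intro x hx
    induction hx using AddSubmonoid.closure_induction with
    | mem x hx =>
      obtain ⟨c, hc, y, rfl⟩ := hx
      obtain ⟨f, rfl⟩ := AdjoinRoot.mk_surjective y
      have hf : AdjoinRoot.mk p f = AdjoinRoot.mk p (f % p) := by
        rw [AdjoinRoot.mk_eq_mk]
        exact ⟨f / p, by rw [sub_eq_iff_eq_add]; exact (EuclideanDomain.div_add_mod f p).symm⟩
      have hd : (f % p).natDegree ≤ p.natDegree - 1 := by
        have := Polynomial.natDegree_mod_lt f hpd.ne'
        omega
      refine ⟨C c * ((f % p) * (f % p)), ?_, ?_, ?_⟩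
      · refine (natDegree_C_mul_le _ _).trans (natDegree_mul_le.trans ?_)
        omega
      · intro z
        simp only [eval_mul, eval_C]
        exact mul_nonneg hc (mul_self_nonneg _)
      · rw [hf]; simp [AdjoinRoot.mk_C]
    | zero => exact ⟨0, by simp, by simp, by simp⟩
    | add x y _ _ hx hy =>
      obtain ⟨s, h1, h2, rfl⟩ := hx
      obtain ⟨t, h3, h4, rfl⟩ := hy
      refine ⟨s + t, (natDegree_add_le _ _).trans (max_le h1 h3), fun z => ?_, by simp⟩
      rw [eval_add]; exact add_nonneg (h2 z) (h4 z)
  refine ⟨fun x hx y hy => (AddSubmonoid.closure G).add_mem hx hy, ?_, ?_, ?_⟩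
  · intro x hx y hy
    change x * y ∈ AddSubmonoid.closure G
    have hx' : x ∈ AddSubmonoid.closure G := hx
    have hy' : y ∈ AddSubmonoid.closure G := hy
    clear hx hy
    induction hx' using AddSubmonoid.closure_induction with
    | zero => simp
    | add x x' h1 h2 ih1 ih2 => rw [add_mul]; exact add_mem ih1 ih2
    | mem x hx =>
      induction hy' using AddSubmonoid.closure_induction with
      | zero => simp
      | add x x' h1 h2 ih1 ih2 => rw [mul_add]; exact add_mem ih1 ih2
      | mem y hy =>
        obtain ⟨c, hc, u, rfl⟩ := hx
        obtain ⟨d, hd, v, rfl⟩ := hy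
        refine AddSubmonoid.subset_closure ⟨c * d, mul_nonneg hc hd, u * v, ?_⟩
        rw [map_mul]; ring
  · intro y
    exact AddSubmonoid.subset_closure ⟨1, zero_le_one, y, by simp⟩
  · intro hx
    obtain ⟨s, h1, h2, h3⟩ := hrep _ hx
    have h4 : AdjoinRoot.mk p (1 + s) = 0 := by
      rw [map_add, ← h3]; simp
    rw [AdjoinRoot.mk_eq_zero] at h4
    obtain ⟨g, hg⟩ := h4
    have hne : (1 + s) ≠ 0 := by
      intro h
      have : (1 + s).eval a = 0 := by rw [h]; simp
      rw [eval_add, eval_one] at this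
      linarith [h2 a]
    have hg0 : g ≠ 0 := by rintro rfl; simp at hg; exact hne hg
    have hdeg : g.natDegree < p.natDegree := by
      have e := congrArg natDegree hg
      rw [natDegree_mul hp0 hg0] at e
      have : (1 + s).natDegree ≤ 2 * (p.natDegree - 1) :=
        (natDegree_add_le _ _).trans (max_le (by simp) h1)
      omega
    have hev : ∀ z, 1 + s.eval z = p.eval z * g.eval z := fun z => by
      have := congrArg (eval z) hg
      simpa using this
    obtain ⟨c, hc⟩ := ih g hdeg (by
      have := hev a
      have := h2 a
      by_contra h; push Not at h
      nlinarith) (by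
      have := hev b
      have := h2 b
      by_contra h; push Not at h
      nlinarith)
    have := hev c
    rw [hc, mul_zero] at this
    linarith [h2 c]

theorem exists_rcf_of_fcone {Ω : Type*} [Field Ω] [IsAlgClosed Ω] {Q0 : Set Ω} (h0 : FCone Q0) :
    ∃ Q : Set Ω, Q0 ⊆ Q ∧ ∃ h : FCone Q, letI := h.lin; PolyIVP h.field := by
  obtain ⟨Q, hQ0, hQ⟩ := zorn_subset_nonempty {P : Set Ω | FCone P} (by
    intro c hc hchain hne
    refine ⟨⋃₀ c, ⟨?_, ?_, ?_, ?_, ?_, ?_⟩, fun s hs => Set.subset_sUnion_of_mem hs⟩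
    · rintro a ⟨s, hs, has⟩ b ⟨t, ht, hbt⟩
      rcases hchain.total hs ht with h | h
      · exact ⟨t, ht, (hc ht).add a (h has) b hbt⟩
      · exact ⟨s, hs, (hc hs).add a has b (h hbt)⟩
    · rintro a ⟨s, hs, has⟩ b ⟨t, ht, hbt⟩
      rcases hchain.total hs ht with h | h
      · exact ⟨t, ht, (hc ht).mul a (h has) b hbt⟩
      · exact ⟨s, hs, (hc hs).mul a has b (h hbt)⟩
    · rintro a ⟨s, hs, has⟩ b ⟨t, ht, hbt⟩
      rcases hchain.total hs ht with h | h
      · exact ((hc ht).sub a (h has) b hbt).imp (fun h => ⟨t, ht, h⟩) (fun h => ⟨t, ht, h⟩)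
      · exact ((hc hs).sub a has b (h hbt)).imp (fun h => ⟨s, hs, h⟩) (fun h => ⟨s, hs, h⟩)
    · rintro a ⟨s, hs, has⟩
      exact ⟨s, hs, (hc hs).inv a has⟩
    · obtain ⟨s, hs⟩ := hne
      exact ⟨s, hs, (hc hs).one⟩
    · rintro ⟨s, hs, h⟩
      exact (hc hs).neg_one h) Q0 h0
  have h : FCone Q := hQ.prop
  refine ⟨Q, hQ0, h, ?_⟩
  letI := h.lin
  haveI := h.ord
  have hnn : ∀ x : h.field, 0 ≤ x ↔ (x : Ω) ∈ Q := h.nonneg_iff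
  suffices H : ∀ n : ℕ, ∀ (p : h.field[X]), p.natDegree ≤ n → ∀ (a b : h.field), a < b →
      p.eval a < 0 → 0 < p.eval b → ∃ c, a < c ∧ c < b ∧ p.eval c = 0 from
    fun p a b => H p.natDegree p le_rfl a b
  intro n
  induction n with
  | zero =>
    intro p hp a b hab hpa hpb
    rw [eq_C_of_natDegree_le_zero hp] at hpa hpb
    simp at hpa hpb
    exact absurd hpa (not_lt.2 hpb.le)
  | succ n ih =>
    intro p hp a b hab hpa hpb
    have hp0 : p ≠ 0 := by rintro rfl; simp at hpa
    have hpu : ¬ IsUnit p := by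
      intro hu
      rw [Polynomial.isUnit_iff] at hu
      obtain ⟨r, _, rfl⟩ := hu
      simp at hpa hpb
      exact absurd hpa (not_lt.2 hpb.le)
    by_cases hirr : Irreducible p
    · by_cases hroot : ∃ c, p.eval c = 0
      · have h1 : p.natDegree = 1 := by
          obtain ⟨c, hc⟩ := hroot
          exact natDegree_eq_of_degree_eq_some (degree_eq_one_of_irreducible_of_root hirr hc)
        obtain ⟨u, hu, v, rfl⟩ := natDegree_eq_one.1 h1
        simp only [eval_add, eval_mul, eval_C, eval_X] at hpa hpb
        have hupos : 0 < u := by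
          by_contra hcon; push Not at hcon
          nlinarith
        refine ⟨-v / u, ?_, ?_, ?_⟩
        · rw [lt_div_iff₀ hupos]; linarith [mul_comm u a]
        · rw [div_lt_iff₀ hupos]; linarith [mul_comm u b]
        · simp; field_simp; ring
      · exfalso
        have hT := preOrd_adjoinRoot p hirr a b hab hpa hpb (fun g hg h1 h2 => by
          obtain ⟨c, _, _, hc⟩ := ih g (by omega) a b hab h1 h2
          exact ⟨c, hc⟩)
        obtain ⟨P, hTP, hP, htot, hprime⟩ := hT.exists_total
        haveI : Fact (Irreducible p) := ⟨hirr⟩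
        obtain ⟨α, hα⟩ := IsAlgClosed.exists_eval₂_eq_zero_of_injective h.field.subtype
          (h.field.subtype.injective) p (by
            intro hd
            have := hirr.natDegree_pos
            rw [natDegree_eq_of_degree_eq_some (n := 0) hd] at this
            exact lt_irrefl _ this)
        let φ : AdjoinRoot p →+* Ω := AdjoinRoot.lift h.field.subtype α hα
        have hφ : Function.Injective φ := φ.injective
        have hφof : ∀ c, φ (AdjoinRoot.of p c) = (c : Ω) := fun c => AdjoinRoot.lift_of hα
        have hQ' : FCone (φ '' P) := by
          refine ⟨?_, ?_, ?_, ?_, ?_, ?_⟩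
          · rintro _ ⟨x, hx, rfl⟩ _ ⟨y, hy, rfl⟩
            exact ⟨x + y, hP.1 _ hx _ hy, map_add _ _ _⟩
          · rintro _ ⟨x, hx, rfl⟩ _ ⟨y, hy, rfl⟩
            exact ⟨x * y, hP.2.1 _ hx _ hy, map_mul _ _ _⟩
          · rintro _ ⟨x, hx, rfl⟩ _ ⟨y, hy, rfl⟩
            rcases htot (x - y) with h | h
            · exact Or.inl ⟨x - y, h, map_sub _ _ _⟩
            · exact Or.inr ⟨y - x, by simpa using h, map_sub _ _ _⟩
          · rintro _ ⟨x, hx, rfl⟩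
            refine ⟨x⁻¹, ?_, map_inv₀ _ _⟩
            by_cases hx0 : x = 0
            · simpa [hx0] using hP.zero_mem
            · have := hP.2.1 _ hx _ (hP.2.2.1 x⁻¹)
              rwa [mul_inv_cancel_left₀ hx0] at this
          · exact ⟨1, hP.one_mem, map_one _⟩
          · rintro ⟨x, hx, hx1⟩
            apply hP.2.2.2
            have : x = -1 := hφ (by rw [hx1]; simp)
            rwa [← this]
        have hsub : Q ⊆ φ '' P := by
          intro x hx
          let y : h.field := ⟨x, Or.inl hx⟩
          refine ⟨AdjoinRoot.of p y, hTP ?_, hφof y⟩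
          exact ⟨_, AddSubmonoid.subset_closure ⟨y, (hnn y).2 hx, 1, rfl⟩, by simp⟩
        have hle : φ '' P ⊆ Q := hQ.le_of_ge hQ' hsub
        have hαK : α ∈ h.field := by
          have hαφ : φ (AdjoinRoot.root p) = α := AdjoinRoot.lift_root hα
          rcases htot (AdjoinRoot.root p) with h' | h'
          · exact Or.inl (hle ⟨_, h', hαφ⟩)
          · exact Or.inr (hle ⟨_, h', by rw [map_neg, hαφ]⟩)
        apply hroot
        refine ⟨⟨α, hαK⟩, ?_⟩
        apply h.field.subtype.injective
        rw [map_zero, ← hα]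
        exact (hom_eval₂ p (RingHom.id _) h.field.subtype ⟨α, hαK⟩)
    · -- reducible
      rw [irreducible_iff] at hirr
      push Not at hirr
      obtain ⟨q, r, rfl, hq, hr⟩ := hirr hpu
      have hq0 : q ≠ 0 := left_ne_zero_of_mul hp0
      have hr0 : r ≠ 0 := right_ne_zero_of_mul hp0
      have hqd : 0 < q.natDegree := by
        by_contra hcon
        push Not at hcon
        apply hq
        rw [eq_C_of_natDegree_le_zero hcon] at hq0 ⊢
        exact isUnit_C.2 (isUnit_iff_ne_zero.2 (by simpa using hq0))
      have hrd : 0 < r.natDegree := by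
        by_contra hcon
        push Not at hcon
        apply hr
        rw [eq_C_of_natDegree_le_zero hcon] at hr0 ⊢
        exact isUnit_C.2 (isUnit_iff_ne_zero.2 (by simpa using hr0))
      rw [natDegree_mul hq0 hr0] at hp
      have ih' : ∀ s : h.field[X], s.natDegree ≤ n → s.eval a * s.eval b < 0 →
          ∃ c, a < c ∧ c < b ∧ s.eval c = 0 := by
        intro s hs hlt
        rcases mul_neg_iff.1 hlt with ⟨h1, h2⟩ | ⟨h1, h2⟩
        · obtain ⟨c, h3, h4, h5⟩ := ih (-s) (by simpa using hs) a b hab (by simpa using h1)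
            (by simpa using h2)
          exact ⟨c, h3, h4, by simpa using h5⟩
        · exact ih s hs a b hab h1 h2
      simp only [eval_mul] at hpa hpb ⊢
      have hprod : (q.eval a * q.eval b) * (r.eval a * r.eval b) < 0 := by
        have := mul_neg_of_neg_of_pos hpa hpb
        convert this using 1; ring
      rcases mul_neg_iff.1 hprod with ⟨_, h2⟩ | ⟨h1, _⟩
      · obtain ⟨c, h3, h4, h5⟩ := ih' r (by omega) h2
        exact ⟨c, h3, h4, by rw [h5, mul_zero]⟩
      · obtain ⟨c, h3, h4, h5⟩ := ih' q (by omega) h1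
        exact ⟨c, h3, h4, by rw [h5, zero_mul]⟩

theorem exists_rcf {A : Type} [CommRing A] {T : Set A} (hT : PreOrd T) :
    ∃ (R : Type) (_ : Field R) (_ : LinearOrder R) (_ : IsStrictOrderedRing R) (π : A →+* R),
      PolyIVP R ∧ ∀ a ∈ T, 0 ≤ π a := by
  obtain ⟨P, hTP, hP, htot, hprime⟩ := hT.exists_total
  have hid : ∀ c x, c ∈ P → -c ∈ P → x * c ∈ P ∧ -(x * c) ∈ P := by
    intro c x h1 h2
    rcases htot x with h | h
    · exact ⟨hP.2.1 _ h _ h1, by simpa using hP.2.1 _ h _ h2⟩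
    · exact ⟨by simpa using hP.2.1 _ h _ h2, by simpa using hP.2.1 _ h _ h1⟩
  let I : Ideal A :=
    { carrier := {a | a ∈ P ∧ -a ∈ P}
      add_mem' := fun {a b} ha hb => ⟨hP.1 _ ha.1 _ hb.1, by
        rw [neg_add]; exact hP.1 _ ha.2 _ hb.2⟩
      zero_mem' := ⟨hP.zero_mem, by simpa using hP.zero_mem⟩
      smul_mem' := fun x c hc => hid c x hc.1 hc.2 }
  have hI : ∀ a, a ∈ I ↔ a ∈ P ∧ -a ∈ P := fun a => Iff.rfl
  haveI : I.IsPrime := by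
    refine ⟨fun h => ?_, fun {a b} hab => hprime a b hab.1 hab.2⟩
    have : (1 : A) ∈ I := by rw [h]; trivial
    exact hP.2.2.2 this.2
  let Ω := AlgebraicClosure (FractionRing (A ⧸ I))
  let π : A →+* Ω := ((algebraMap (FractionRing (A ⧸ I)) Ω).comp
    (algebraMap (A ⧸ I) (FractionRing (A ⧸ I)))).comp (Ideal.Quotient.mk I)
  have hπ : ∀ a, π a = 0 ↔ a ∈ I := by
    intro a
    rw [← Ideal.Quotient.eq_zero_iff_mem]
    simp [π]
  have hπ0 : ∀ a ∈ P, ∀ b ∈ P, π a = - π b → π b = 0 := by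
    intro a ha b hb hab
    have : π (a + b) = 0 := by rw [map_add, hab]; ring
    rw [hπ] at this ⊢
    refine ⟨hb, ?_⟩
    have := hP.1 _ ha _ this.2
    convert this using 1; ring
  have h0 : FCone {x : Ω | ∃ a ∈ P, ∃ b ∈ P, π b ≠ 0 ∧ x = π a / π b} := by
    refine ⟨?_, ?_, ?_, ?_, ?_, ?_⟩
    · rintro _ ⟨a, ha, b, hb, hb0, rfl⟩ _ ⟨c, hc, d, hd, hd0, rfl⟩
      refine ⟨a * d + b * c, hP.1 _ (hP.2.1 _ ha _ hd) _ (hP.2.1 _ hb _ hc), b * d,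
        hP.2.1 _ hb _ hd, by simp [hb0, hd0], ?_⟩
      rw [div_add_div _ _ hb0 hd0]; simp
    · rintro _ ⟨a, ha, b, hb, hb0, rfl⟩ _ ⟨c, hc, d, hd, hd0, rfl⟩
      refine ⟨a * c, (hP.2.1 _ ha _ hc), b * d,
        hP.2.1 _ hb _ hd, by simp [hb0, hd0], ?_⟩
      rw [div_mul_div_comm]; simp
    · rintro _ ⟨a, ha, b, hb, hb0, rfl⟩ _ ⟨c, hc, d, hd, hd0, rfl⟩
      rcases htot (a * d - b * c) with h | h
      · left
        refine ⟨_, h, b * d, hP.2.1 _ hb _ hd, by simp [hb0, hd0], ?_⟩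
        rw [div_sub_div _ _ hb0 hd0]; simp
      · right
        refine ⟨_, h, b * d, hP.2.1 _ hb _ hd, by simp [hb0, hd0], ?_⟩
        rw [div_sub_div _ _ hd0 hb0]; simp
        rw [mul_comm (π d) (π b)]; congr 1; ring
    · rintro _ ⟨a, ha, b, hb, hb0, rfl⟩
      by_cases ha0 : π a = 0
      · exact ⟨0, hP.zero_mem, 1, hP.one_mem, by simp, by simp [ha0]⟩
      · exact ⟨b, hb, a, ha, ha0, by simp⟩
    · exact ⟨1, hP.one_mem, 1, hP.one_mem, by simp, by simp⟩
    · rintro ⟨a, ha, b, hb, hb0, h⟩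
      apply hb0
      apply hπ0 a ha b hb
      rw [eq_div_iff hb0] at h
      rw [← h]; ring
  obtain ⟨Q, hQ0, h, hivp⟩ := exists_rcf_of_fcone h0
  have hPQ : ∀ a ∈ P, π a ∈ Q := fun a ha => hQ0 ⟨a, ha, 1, hP.one_mem, by simp, by simp⟩
  letI := h.lin
  haveI := h.ord
  refine ⟨h.field, inferInstance, h.lin, h.ord, π.codRestrict h.field (fun a => ?_), hivp, ?_⟩
  · rcases htot a with h' | h'
    · exact Or.inl (hPQ a h')
    · right
      have := hPQ _ h'
      rwa [map_neg] at this
  · intro a ha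
    exact (h.nonneg_iff _).2 (hPQ a (hTP ha))

end

section

open Polynomial

section ivp
variable {R : Type*} [Field R] [LinearOrder R] [IsStrictOrderedRing R]

theorem PolyIVP.mul_neg (h : PolyIVP R) (p : R[X]) {a b : R} (hab : a < b)
    (hp : p.eval a * p.eval b < 0) : ∃ c, a < c ∧ c < b ∧ p.eval c = 0 := by
  rcases mul_neg_iff.1 hp with ⟨h1, h2⟩ | ⟨h1, h2⟩
  · obtain ⟨c, h3, h4, h5⟩ := h (-p) a b hab (by simpa using h1) (by simpa using h2)
    exact ⟨c, h3, h4, by simpa using h5⟩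
  · exact h p a b hab h1 h2

theorem PolyIVP.mul_pos (h : PolyIVP R) (p : R[X]) {a b : R} (hab : a ≤ b)
    (hp : ∀ c, a ≤ c → c ≤ b → p.eval c ≠ 0) : 0 < p.eval a * p.eval b := by
  rcases hab.eq_or_lt with rfl | hab'
  · exact mul_self_pos.2 (hp a le_rfl le_rfl)
  by_contra hcon
  have : p.eval a * p.eval b ≠ 0 := mul_ne_zero (hp a le_rfl hab) (hp b hab le_rfl)
  obtain ⟨c, h1, h2, h3⟩ := h.mul_neg p hab' (lt_of_le_of_ne (not_lt.1 hcon) this)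
  exact hp c h1.le h2.le h3

theorem PolyIVP.pos_of_pos (h : PolyIVP R) (p : R[X]) {a b x y : R}
    (hp : ∀ c, a < c → c < b → p.eval c ≠ 0) (hx : a < x) (hx' : x < b) (hy : a < y) (hy' : y < b)
    (hpx : 0 < p.eval x) : 0 < p.eval y := by
  rcases le_total x y with hxy | hxy
  · have := h.mul_pos p hxy (fun c h1 h2 => hp c (hx.trans_le h1) (h2.trans_lt hy'))
    exact pos_of_mul_pos_right this hpx.le
  · have := h.mul_pos p hxy (fun c h1 h2 => hp c (hy.trans_le h1) (h2.trans_lt hx'))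
    exact pos_of_mul_pos_left this hpx.le

theorem PolyIVP.rolle_aux (h : PolyIVP R) (p : R[X]) (hp0 : p ≠ 0) {a b : R} (hab : a < b)
    (ha : p.eval a = 0) (hb : p.eval b = 0) (hno : ∀ c, a < c → c < b → p.eval c ≠ 0) :
    ∃ c, a < c ∧ c < b ∧ p.derivative.eval c = 0 := by
  obtain ⟨q, hq, hqa⟩ := exists_eq_pow_rootMultiplicity_mul_and_not_dvd p hp0 a
  rw [dvd_iff_isRoot, IsRoot.def] at hqa
  have hm : 0 < p.rootMultiplicity a := (rootMultiplicity_pos hp0).2 ha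
  obtain ⟨m, hm⟩ := Nat.exists_eq_succ_of_ne_zero hm.ne'
  rw [hm] at hq
  have hq0 : q ≠ 0 := by rintro rfl; simp at hqa
  have hqb : q.eval b = 0 := by
    rw [hq] at hb
    simp only [eval_mul, eval_pow, eval_sub, eval_X, eval_C] at hb
    rcases mul_eq_zero.1 hb with h' | h'
    · exact absurd (eq_zero_of_pow_eq_zero h') (sub_pos.2 hab).ne'
    · exact h'
  obtain ⟨w, hw, hwb⟩ := exists_eq_pow_rootMultiplicity_mul_and_not_dvd q hq0 b
  rw [dvd_iff_isRoot, IsRoot.def] at hwb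
  have hk : 0 < q.rootMultiplicity b := (rootMultiplicity_pos hq0).2 hqb
  obtain ⟨k, hk⟩ := Nat.exists_eq_succ_of_ne_zero hk.ne'
  rw [hk] at hw
  have hwa : w.eval a ≠ 0 := by
    intro h'; apply hqa; rw [hw]; simp [h']
  have hpos : 0 < w.eval a * w.eval b := by
    apply h.mul_pos w hab.le
    intro c h1 h2 h3
    rcases h1.eq_or_lt with rfl | h1
    · exact hwa h3
    rcases h2.eq_or_lt with rfl | h2
    · exact hwb h3
    apply hno c h1 h2
    rw [hq, hw]; simp [h3]
  let s : R[X] := C ((m : R) + 1) * (X - C b) * w + C ((k : R) + 1) * (X - C a) * w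
    + (X - C a) * (X - C b) * derivative w
  have hder : derivative p = (X - C a) ^ m * (X - C b) ^ k * s := by
    rw [hq, hw]
    simp only [s, derivative_mul, derivative_X_sub_C_pow, Nat.succ_eq_add_one, map_add, map_one,
      map_natCast, Nat.cast_add, Nat.cast_one, Nat.add_sub_cancel]
    ring
  have hs : s.eval a * s.eval b < 0 := by
    simp only [s, eval_add, eval_mul, eval_sub, eval_C, eval_X]
    have e : (((m : R) + 1) * (a - b) * eval a w + ((k : R) + 1) * (a - a) * eval a w + (a - a) * (a - b) * eval a (derivative w)) *
      (((m : R) + 1) * (b - b) * eval b w + ((k : R) + 1) * (b - a) * eval b w + (b - a) * (b - b) * eval b (derivative w))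
      = - ((((m : R) + 1) * ((k : R) + 1)) * ((b - a) * (b - a)) * (eval a w * eval b w)) := by ring
    rw [e, neg_lt_zero]
    have : 0 < b - a := sub_pos.2 hab
    positivity
  obtain ⟨c, h1, h2, h3⟩ := h.mul_neg s hab hs
  exact ⟨c, h1, h2, by rw [hder, eval_mul, h3, mul_zero]⟩

theorem PolyIVP.rolle (h : PolyIVP R) (p : R[X]) (hp0 : p ≠ 0) {a b : R} (hab : a < b)
    (ha : p.eval a = 0) (hb : p.eval b = 0) :
    ∃ c, a < c ∧ c < b ∧ p.derivative.eval c = 0 := by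
  classical
  let Z := p.roots.toFinset.filter (fun z => a < z)
  have hbZ : b ∈ Z := by simp [Z, hp0, hb, hab]
  have hmem := Z.min'_mem ⟨b, hbZ⟩
  set z := Z.min' ⟨b, hbZ⟩ with hz
  simp only [Z, Finset.mem_filter, Multiset.mem_toFinset, mem_roots hp0, IsRoot.def] at hmem
  obtain ⟨c, h1, h2, h3⟩ := h.rolle_aux p hp0 hmem.2 ha hmem.1 (fun c h1 h2 h3 => by
    have : z ≤ c := Z.min'_le c (by simp [Z, hp0, h3, h1])
    exact absurd this (not_le.2 h2))
  exact ⟨c, h1, h2.trans_le (Z.min'_le b hbZ), h3⟩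

theorem PolyIVP.sign_change (h : PolyIVP R) (q : R[X]) (hq0 : q ≠ 0) {a b c : R} (hac : a < c)
    (hcb : c < b) (hc : q.eval c = 0) (hder : ∀ z, a < z → z < b → q.derivative.eval z ≠ 0) :
    q.eval a * q.eval b < 0 := by
  obtain ⟨w, hw⟩ := dvd_iff_isRoot.2 (show q.IsRoot c from hc)
  have hwc : w.eval c ≠ 0 := by
    intro h'
    apply hder c hac hcb
    rw [hw]; simp [derivative_mul, h']
  have hpos : 0 < w.eval a * w.eval b := by
    apply h.mul_pos w (hac.trans hcb).le
    intro z h1 h2 h3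
    have hqz : q.eval z = 0 := by rw [hw]; simp [h3]
    rcases lt_trichotomy z c with h4 | rfl | h4
    · obtain ⟨y, h5, h6, h7⟩ := h.rolle q hq0 h4 hqz hc
      exact hder y (h1.trans_lt h5) (h6.trans hcb) h7
    · exact hwc h3
    · obtain ⟨y, h5, h6, h7⟩ := h.rolle q hq0 h4 hc hqz
      exact hder y (hac.trans h5) (h6.trans_le h2) h7
  have e : q.eval a * q.eval b = - (((c - a) * (b - c)) * (w.eval a * w.eval b)) := by
    rw [hw]; simp; ring
  rw [e, neg_lt_zero]
  have := sub_pos.2 hac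
  have := sub_pos.2 hcb
  positivity

theorem root_bound (q : R[X]) (hq0 : q ≠ 0) {c : R} (hc : q.eval c = 0) :
    |c| < 2 + ∑ i ∈ Finset.range q.natDegree, |q.coeff i| / |q.leadingCoeff| := by
  have hl : 0 < |q.leadingCoeff| := abs_pos.2 (leadingCoeff_ne_zero.2 hq0)
  have hS : 0 ≤ ∑ i ∈ Finset.range q.natDegree, |q.coeff i| / |q.leadingCoeff| :=
    Finset.sum_nonneg fun i _ => by positivity
  by_cases hc1 : |c| ≤ 1
  · linarith
  push Not at hc1
  have hd : q.natDegree ≠ 0 := by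
    intro hd
    rw [eq_C_of_natDegree_eq_zero hd] at hc hq0
    simp at hc
    simp [hc] at hq0
  obtain ⟨d, hd⟩ := Nat.exists_eq_succ_of_ne_zero hd
  rw [eval_eq_sum_range, Finset.sum_range_succ] at hc
  have h1 : |q.leadingCoeff| * |c| ^ (d + 1) ≤ (∑ i ∈ Finset.range q.natDegree, |q.coeff i|) * |c| ^ d := by
    have : q.leadingCoeff * c ^ (d + 1) = - ∑ i ∈ Finset.range q.natDegree, q.coeff i * c ^ i := by
      rw [leadingCoeff, ← Nat.succ_eq_add_one, ← hd]
      linear_combination hc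
    rw [← abs_pow, ← abs_mul, this, abs_neg, Finset.sum_mul]
    refine (Finset.abs_sum_le_sum_abs _ _).trans (Finset.sum_le_sum fun i hi => ?_)
    rw [abs_mul, abs_pow]
    refine mul_le_mul_of_nonneg_left (pow_le_pow_right₀ hc1.le ?_) (abs_nonneg _)
    have := Finset.mem_range.1 hi
    omega
  have hcd : 0 < |c| ^ d := by positivity
  have h2 : |q.leadingCoeff| * |c| ≤ ∑ i ∈ Finset.range q.natDegree, |q.coeff i| := by
    rw [pow_succ'] at h1
    exact le_of_mul_le_mul_right (by linarith) hcd
  rw [← Finset.sum_div]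
  have : |c| ≤ (∑ i ∈ Finset.range q.natDegree, |q.coeff i|) / |q.leadingCoeff| := by
    rw [le_div_iff₀ hl]; linarith
  linarith

end ivp

section transfer
variable {K R R' : Type*} [Field K] [LinearOrder K] [IsStrictOrderedRing K]
  [Field R] [LinearOrder R] [IsStrictOrderedRing R]
  [Field R'] [LinearOrder R'] [IsStrictOrderedRing R']

/-- All roots in `R` of polynomials over `K` of degree `< n` lie in `K`. -/
def RootsIn (i : K →+* R) (n : ℕ) : Prop :=
  ∀ q : K[X], q ≠ 0 → q.natDegree < n → ∀ x, (q.map i).eval x = 0 → x ∈ Set.range i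

theorem exists_adjacent (j : K →+* R) (hj : StrictMono j) (Z : Finset K) {c : R}
    (hc : c ∉ Set.range j) (h1 : ∃ z ∈ Z, j z < c) (h2 : ∃ z ∈ Z, c < j z) :
    ∃ u v : K, j u < c ∧ c < j v ∧ ∀ z ∈ Z, ¬ (u < z ∧ z < v) := by
  classical
  obtain ⟨z1, hz1, hz1'⟩ := h1
  obtain ⟨z2, hz2, hz2'⟩ := h2
  let Z1 := Z.filter (fun z => j z < c)
  let Z2 := Z.filter (fun z => c < j z)
  have hn1 : Z1.Nonempty := ⟨z1, by simp [Z1, hz1, hz1']⟩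
  have hn2 : Z2.Nonempty := ⟨z2, by simp [Z2, hz2, hz2']⟩
  have hm1 := Z1.max'_mem hn1
  have hm2 := Z2.min'_mem hn2
  refine ⟨Z1.max' hn1, Z2.min' hn2, (Finset.mem_filter.1 hm1).2, (Finset.mem_filter.1 hm2).2, ?_⟩
  rintro z hz ⟨h3, h4⟩
  rcases lt_trichotomy (j z) c with h | h | h
  · exact absurd (Z1.le_max' z (by simp [Z1, hz, h])) (not_le.2 h3)
  · exact hc ⟨z, h⟩
  · exact absurd (Z2.min'_le z (by simp [Z2, hz, h])) (not_le.2 h4)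

theorem map_abs_of_strictMono (j : K →+* R) (hj : StrictMono j) (x : K) : j |x| = |j x| := by
  rcases le_total 0 x with h | h
  · rw [abs_of_nonneg h, abs_of_nonneg]
    simpa using hj.monotone h
  · rw [abs_of_nonpos h, abs_of_nonpos, map_neg]
    simpa using hj.monotone h

theorem exists_root_bound (j : K →+* R) (hj : StrictMono j) (q : K[X]) (hq : q ≠ 0) {c : R}
    (hc : (q.map j).eval c = 0) : ∃ B : K, j (-B) < c ∧ c < j B := by
  have h := root_bound (q.map j) ((Polynomial.map_ne_zero_iff j.injective).2 hq) hc
  refine ⟨2 + ∑ i ∈ Finset.range q.natDegree, |q.coeff i| / |q.leadingCoeff|, ?_⟩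
  have e : j (2 + ∑ i ∈ Finset.range q.natDegree, |q.coeff i| / |q.leadingCoeff|) =
      2 + ∑ i ∈ Finset.range (q.map j).natDegree, |(q.map j).coeff i| / |(q.map j).leadingCoeff| := by
    rw [natDegree_map_eq_of_injective j.injective, leadingCoeff_map_of_injective j.injective]
    simp [map_abs_of_strictMono j hj, map_sum]
    exact map_ofNat j 2
  rw [map_neg, e]
  exact abs_lt.1 h

theorem RootsIn.transfer {i : K →+* R} {j : K →+* R'} (hi : StrictMono i) (hj : StrictMono j)
    (hR : PolyIVP R) (hR' : PolyIVP R') {n : ℕ} (H : RootsIn i n) : RootsIn j n := by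
  classical
  suffices H' : ∀ d, ∀ q : K[X], q ≠ 0 → q.natDegree = d → d < n →
      ∀ x, (q.map j).eval x = 0 → x ∈ Set.range j from
    fun q hq hqn => H' _ q hq rfl hqn
  intro d
  induction d using Nat.strong_induction_on with
  | _ d ih =>
  intro q hq hqd hdn c hc
  by_contra hcr
  have hd : q.natDegree ≠ 0 := by
    intro hd
    rw [eq_C_of_natDegree_eq_zero hd] at hc hq
    simp at hc
    simp [hc] at hq
  have hder0 : derivative q ≠ 0 := fun h => hd (derivative_eq_zero.1 h)
  have hderd : (derivative q).natDegree < q.natDegree := natDegree_derivative_lt hd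
  obtain ⟨B, hB1, hB2⟩ := exists_root_bound j hj q hq hc
  let Z : Finset K := q.roots.toFinset ∪ (derivative q).roots.toFinset ∪ {-B, B}
  obtain ⟨u, v, huc, hcv, hadj⟩ := exists_adjacent j hj Z hcr ⟨-B, by simp [Z], hB1⟩
    ⟨B, by simp [Z], hB2⟩
  have hsc := hR'.sign_change (q.map j) ((Polynomial.map_ne_zero_iff j.injective).2 hq) huc hcv hc
    (by
      intro z h1 h2 h3
      rw [derivative_map] at h3
      obtain ⟨y, rfl⟩ := ih _ (hqd ▸ hderd) _ hder0 rfl (by omega) z h3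
      rw [eval_map_apply, map_eq_zero] at h3
      refine hadj y ?_ ⟨hj.lt_iff_lt.1 h1, hj.lt_iff_lt.1 h2⟩
      simp [Z, hder0, h3])
  rw [eval_map_apply, eval_map_apply, ← map_mul] at hsc
  have hsc' : q.eval u * q.eval v < 0 := by
    rw [← map_zero j] at hsc
    exact hj.lt_iff_lt.1 hsc
  obtain ⟨x, h1, h2, h3⟩ := hR.mul_neg (q.map i) (hi (hj.lt_iff_lt.1 (huc.trans hcv))) (by
    rw [eval_map_apply, eval_map_apply, ← map_mul, ← map_zero i]
    exact hi hsc')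
  obtain ⟨y, rfl⟩ := H q hq (hqd ▸ hdn) x h3
  rw [eval_map_apply, map_eq_zero] at h3
  refine hadj y ?_ ⟨hi.lt_iff_lt.1 h1, hi.lt_iff_lt.1 h2⟩
  simp [Z, hq, h3]

theorem RootsIn.pos_transfer {i : K →+* R} {j : K →+* R'} (hi : StrictMono i) (hj : StrictMono j)
    (hR : PolyIVP R) (hR' : PolyIVP R') {n : ℕ} (H : RootsIn i n) (q : K[X])
    (hqn : q.natDegree < n) {u v : K} (hno : ∀ z, q.eval z = 0 → ¬ (u < z ∧ z < v))
    {x : R} {y : R'} (hx : i u < x) (hx' : x < i v) (hy : j u < y) (hy' : y < j v)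
    (hpos : 0 < (q.map i).eval x) : 0 < (q.map j).eval y := by
  have hq : q ≠ 0 := by rintro rfl; simp at hpos
  have H' := H.transfer hi hj hR hR'
  have huv : u < v := hi.lt_iff_lt.1 (hx.trans hx')
  obtain ⟨w, hw1, hw2⟩ := exists_between huv
  have h1 : 0 < (q.map i).eval (i w) := by
    refine hR.pos_of_pos (q.map i) ?_ hx hx' (hi hw1) (hi hw2) hpos
    intro c hc1 hc2 hc3
    obtain ⟨z, rfl⟩ := H q hq hqn c hc3
    rw [eval_map_apply, map_eq_zero] at hc3
    exact hno z hc3 ⟨hi.lt_iff_lt.1 hc1, hi.lt_iff_lt.1 hc2⟩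
  rw [eval_map_apply, ← map_zero i] at h1
  have h2 : 0 < (q.map j).eval (j w) := by
    rw [eval_map_apply, ← map_zero j]
    exact hj (hi.lt_iff_lt.1 h1)
  refine hR'.pos_of_pos (q.map j) ?_ (hj hw1) (hj hw2) hy hy' h2
  intro c hc1 hc2 hc3
  obtain ⟨z, rfl⟩ := H' q hq hqn c hc3
  rw [eval_map_apply, map_eq_zero] at hc3
  exact hno z hc3 ⟨hj.lt_iff_lt.1 hc1, hj.lt_iff_lt.1 hc2⟩

end transfer

end

section

open Polynomial Filter

section germ
variable {ι : Type} {U : Ultrafilter ι}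

set_option linter.unusedSectionVars false

theorem germ_eval (p : (Germ (U : Filter ι) ℝ)[X]) :
    ∃ P : ι → ℝ[X], ∀ f : ι → ℝ, p.eval (f : Germ (U : Filter ι) ℝ) =
      ((fun i => (P i).eval (f i) : ι → ℝ) : Germ (U : Filter ι) ℝ) := by
  induction p using Polynomial.induction_on' with
  | add p q hp hq =>
    obtain ⟨P, hP⟩ := hp
    obtain ⟨Q, hQ⟩ := hq
    refine ⟨fun i => P i + Q i, fun f => ?_⟩
    rw [eval_add, hP, hQ, ← Germ.coe_add]
    congr 1
    ext i; simp
  | monomial n a =>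
    induction a using Germ.inductionOn with
    | h a =>
    refine ⟨fun i => monomial n (a i), fun f => ?_⟩
    rw [eval_monomial, ← Germ.coe_pow, ← Germ.coe_mul]
    congr 1
    ext i; simp

theorem germ_polyIVP : PolyIVP (Germ (U : Filter ι) ℝ) := by
  intro p a b hab ha hb
  obtain ⟨P, hP⟩ := germ_eval p
  induction a using Germ.inductionOn with | h a =>
  induction b using Germ.inductionOn with | h b =>
  rw [hP] at ha hb
  have ha' := Germ.coe_lt.1 (show _ < ((fun _ => 0 : ι → ℝ) : Germ (U : Filter ι) ℝ) from ha)
  have hb' := Germ.coe_lt.1 (show ((fun _ => 0 : ι → ℝ) : Germ (U : Filter ι) ℝ) < _ from hb)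
  have hab' := Germ.coe_lt.1 hab
  have key : ∀ i, ∃ c, (a i < b i → (P i).eval (a i) < 0 → 0 < (P i).eval (b i) →
      a i < c ∧ c < b i ∧ (P i).eval c = 0) := by
    intro i
    by_cases h1 : a i < b i ∧ (P i).eval (a i) < 0 ∧ 0 < (P i).eval (b i)
    · obtain ⟨c, hc, hc'⟩ := intermediate_value_Ioo h1.1.le (P i).continuous.continuousOn
        (show (0:ℝ) ∈ Set.Ioo _ _ from ⟨h1.2.1, h1.2.2⟩)
      exact ⟨c, fun _ _ _ => ⟨hc.1, hc.2, hc'⟩⟩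
    · exact ⟨0, fun h2 h3 h4 => absurd ⟨h2, h3, h4⟩ h1⟩
  choose c hc using key
  refine ⟨(c : Germ (U : Filter ι) ℝ), Germ.coe_lt.2 ?_, Germ.coe_lt.2 ?_, ?_⟩
  · filter_upwards [ha', hb', hab'] with i h1 h2 h3 using (hc i h3 h1 h2).1
  · filter_upwards [ha', hb', hab'] with i h1 h2 h3 using (hc i h3 h1 h2).2.1
  · rw [hP]
    refine Germ.coe_eq.2 ?_
    filter_upwards [ha', hb', hab'] with i h1 h2 h3 using (hc i h3 h1 h2).2.2
end germ

section AL
variable {R : Type} [Field R] [LinearOrder R] [IsStrictOrderedRing R] [Algebra ℝ R]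

structure GoodOn (φ : R → ℝ) (E : Set R) : Prop where
  alg : ∀ r, φ (algebraMap ℝ R r) = r
  add : ∀ a ∈ E, ∀ b ∈ E, φ (a + b) = φ a + φ b
  mul : ∀ a ∈ E, ∀ b ∈ E, φ (a * b) = φ a * φ b
  pos : ∀ a ∈ E, 0 < a → 0 < φ a

structure GGoodOn {ι : Type} {U : Ultrafilter ι} (ψ : R → Germ (U : Filter ι) ℝ) (E : Set R) :
    Prop where
  alg : ∀ r : ℝ, ψ (algebraMap ℝ R r) = ((fun _ => r : ι → ℝ) : Germ (U : Filter ι) ℝ)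
  add : ∀ a ∈ E, ∀ b ∈ E, ψ (a + b) = ψ a + ψ b
  mul : ∀ a ∈ E, ∀ b ∈ E, ψ (a * b) = ψ a * ψ b
  pos : ∀ a ∈ E, 0 < a → 0 < ψ a

def SG (B : Set R) : Prop := ∀ E : Finset R, (E : Set R) ⊆ B → ∃ φ : R → ℝ, GoodOn φ (E : Set R)

theorem SG.exists_germ {B : Set R} (h : SG B) :
    ∃ (ι : Type) (U : Ultrafilter ι) (ψ : R → Germ (U : Filter ι) ℝ), GGoodOn ψ B := by
  classical
  choose φ hφ using fun E : {E : Finset R // (E : Set R) ⊆ B} => h E.1 E.2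
  have : Nonempty {E : Finset R // (E : Set R) ⊆ B} := ⟨⟨∅, by simp⟩⟩
  have : IsDirected {E : Finset R // (E : Set R) ⊆ B} (· ≤ ·) :=
    ⟨fun a b => ⟨⟨a.1 ∪ b.1, by simp [a.2, b.2]⟩, Finset.subset_union_left, Finset.subset_union_right⟩⟩
  let U : Ultrafilter {E : Finset R // (E : Set R) ⊆ B} := Ultrafilter.of atTop
  have hU : ∀ F : {E : Finset R // (E : Set R) ⊆ B}, ∀ᶠ E in (U : Filter _), F ≤ E :=
    fun F => Ultrafilter.of_le atTop (eventually_ge_atTop F)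
  refine ⟨_, U, fun x => Germ.ofFun (fun E => φ E x), ?_, ?_, ?_, ?_⟩
  · intro r
    congr 1
    ext E
    exact (hφ E).alg r
  · intro a ha b hb
    refine Germ.coe_eq.2 ?_
    filter_upwards [hU ⟨{a, b}, by intro x; simp; rintro (rfl | rfl) <;> assumption⟩] with E hE
    exact (hφ E).add a (hE (by simp)) b (hE (by simp))
  · intro a ha b hb
    refine Germ.coe_eq.2 ?_
    filter_upwards [hU ⟨{a, b}, by intro x; simp; rintro (rfl | rfl) <;> assumption⟩] with E hE
    exact (hφ E).mul a (hE (by simp)) b (hE (by simp))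
  · intro a ha hpos
    refine Germ.coe_lt.2 ?_
    filter_upwards [hU ⟨{a}, by simpa using ha⟩] with E hE
    exact (hφ E).pos a (hE (by simp)) hpos

theorem GGoodOn.exists_good {ι : Type} {U : Ultrafilter ι} {ψ : R → Germ (U : Filter ι) ℝ}
    {E : Finset R} (h : GGoodOn ψ (E : Set R)) : ∃ φ : R → ℝ, GoodOn φ (E : Set R) := by
  classical
  have hex : ∀ x : R, ∃ f : ι → ℝ, (f : Germ (U : Filter ι) ℝ) = ψ x ∧
      ∀ r, x = algebraMap ℝ R r → ∀ i, f i = r := by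
    intro x
    by_cases hx : ∃ r, x = algebraMap ℝ R r
    · obtain ⟨r, rfl⟩ := hx
      exact ⟨fun _ => r, (h.alg r).symm, fun s hs i => (algebraMap ℝ R).injective hs⟩
    · obtain ⟨f, hf⟩ := Quotient.exists_rep (ψ x)
      exact ⟨f, hf, fun r hr => absurd ⟨r, hr⟩ hx⟩
  choose f hf hf' using hex
  have h1 : ∀ᶠ i in (U : Filter ι), ∀ a ∈ E, ∀ b ∈ E, f (a + b) i = f a i + f b i := by
    refine (eventually_all_finset E).2 fun a ha => (eventually_all_finset E).2 fun b hb => ?_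
    have := h.add a ha b hb
    rw [← hf, ← hf, ← hf] at this
    exact Germ.coe_eq.1 this
  have h2 : ∀ᶠ i in (U : Filter ι), ∀ a ∈ E, ∀ b ∈ E, f (a * b) i = f a i * f b i := by
    refine (eventually_all_finset E).2 fun a ha => (eventually_all_finset E).2 fun b hb => ?_
    have := h.mul a ha b hb
    rw [← hf, ← hf, ← hf] at this
    exact Germ.coe_eq.1 this
  have h3 : ∀ᶠ i in (U : Filter ι), ∀ a ∈ E, 0 < a → 0 < f a i := by
    refine (eventually_all_finset E).2 fun a ha => ?_
    by_cases hpos : 0 < a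
    · have := h.pos a ha hpos
      rw [← hf] at this
      filter_upwards [Germ.coe_lt.1 (show ((fun _ => 0 : ι → ℝ) : Germ (U : Filter ι) ℝ) < _ from this)] with i hi _ using hi
    · exact Eventually.of_forall fun i hi => absurd hi hpos
  obtain ⟨i, h1, h2, h3⟩ := (h1.and (h2.and h3)).exists
  exact ⟨fun x => f x i, fun r => hf' _ r rfl i, h1, h2, h3⟩

theorem SG.mono {B B' : Set R} (h : SG B) (hB : B' ⊆ B) : SG B' := fun E hE => h E (hE.trans hB)

theorem SG.frac {B : Subring R} (h : SG (B : Set R)) (hB : ∀ r, algebraMap ℝ R r ∈ B) :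
    SG {x : R | ∃ a ∈ B, ∃ b ∈ B, 0 < b ∧ x = a / b} := by
  classical
  obtain ⟨ι, U, ψ, hψ⟩ := h.exists_germ
  intro E hE
  have hex : ∀ x : R, ∃ a b : R, (∃ a ∈ B, ∃ b ∈ B, 0 < b ∧ x = a / b) →
      (a ∈ B ∧ b ∈ B ∧ 0 < b ∧ x = a / b) := by
    intro x
    by_cases hx : ∃ a ∈ B, ∃ b ∈ B, 0 < b ∧ x = a / b
    · obtain ⟨a, ha, b, hb, h1, h2⟩ := hx
      exact ⟨a, b, fun _ => ⟨ha, hb, h1, h2⟩⟩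
    · exact ⟨0, 0, fun h => absurd h hx⟩
  choose n d hnd using hex
  -- well-definedness
  have key : ∀ x, (∃ a ∈ B, ∃ b ∈ B, 0 < b ∧ x = a / b) → ∀ a ∈ B, ∀ b ∈ B, 0 < b → x = a / b →
      ψ (n x) / ψ (d x) = ψ a / ψ b := by
    intro x hx a ha b hb hb0 hxab
    obtain ⟨h1, h2, h3, h4⟩ := hnd x hx
    have e1 := hψ.pos _ h2 h3
    have e2 := hψ.pos _ hb hb0
    rw [div_eq_div_iff e1.ne' e2.ne', ← hψ.mul _ h1 _ hb, ← hψ.mul _ ha _ h2]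
    congr 1
    rw [h4] at hxab
    rwa [div_eq_div_iff h3.ne' hb0.ne'] at hxab
  refine GGoodOn.exists_good (ψ := fun x => ψ (n x) / ψ (d x)) ⟨?_, ?_, ?_, ?_⟩
  · intro r
    have hr : algebraMap ℝ R r = algebraMap ℝ R r / 1 := by simp
    rw [key _ ⟨_, hB r, 1, B.one_mem, one_pos, hr⟩ _ (hB r) 1 B.one_mem one_pos hr, hψ.alg]
    have := hψ.alg 1
    rw [map_one] at this
    rw [this]
    exact div_one _
  · intro x hx y hy
    obtain ⟨h1, h2, h3, h4⟩ := hnd x (hE hx)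
    obtain ⟨k1, k2, k3, k4⟩ := hnd y (hE hy)
    have e : x + y = (n x * d y + d x * n y) / (d x * d y) := by
      conv_lhs => rw [h4, k4]
      rw [div_add_div _ _ h3.ne' k3.ne']
    have m1 := B.add_mem (B.mul_mem h1 k2) (B.mul_mem h2 k1)
    have m2 := B.mul_mem h2 k2
    rw [key (x + y) ⟨_, m1, _, m2, mul_pos h3 k3, e⟩ _ m1 _ m2 (mul_pos h3 k3) e,
      hψ.add _ (B.mul_mem h1 k2) _ (B.mul_mem h2 k1), hψ.mul _ h1 _ k2, hψ.mul _ h2 _ k1,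
      hψ.mul _ h2 _ k2, div_add_div _ _ (hψ.pos _ h2 h3).ne' (hψ.pos _ k2 k3).ne']
  · intro x hx y hy
    obtain ⟨h1, h2, h3, h4⟩ := hnd x (hE hx)
    obtain ⟨k1, k2, k3, k4⟩ := hnd y (hE hy)
    have e : x * y = (n x * n y) / (d x * d y) := by
      conv_lhs => rw [h4, k4]
      rw [div_mul_div_comm]
    have m1 := B.mul_mem h1 k1
    have m2 := B.mul_mem h2 k2
    rw [key (x * y) ⟨_, m1, _, m2, mul_pos h3 k3, e⟩ _ m1 _ m2 (mul_pos h3 k3) e,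
      hψ.mul _ h1 _ k1, hψ.mul _ h2 _ k2, div_mul_div_comm]
  · intro x hx hpos
    obtain ⟨h1, h2, h3, h4⟩ := hnd x (hE hx)
    refine div_pos (hψ.pos _ h1 ?_) (hψ.pos _ h2 h3)
    rw [h4] at hpos
    have := mul_pos hpos h3
    rwa [div_mul_cancel₀ _ h3.ne'] at this

end AL

end

section

open Polynomial Filter

set_option linter.unusedSectionVars false
section AL2
variable {R : Type} [Field R] [LinearOrder R] [IsStrictOrderedRing R] [Algebra ℝ R]

theorem SG.exists_hom {K : Subfield R} (h : SG (K : Set R)) (hK : ∀ r, algebraMap ℝ R r ∈ K) :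
    ∃ (ι : Type) (U : Ultrafilter ι) (j : K →+* Germ (U : Filter ι) ℝ), StrictMono j ∧
      ∀ r : ℝ, j ⟨algebraMap ℝ R r, hK r⟩ = Germ.ofFun (fun _ => r) := by
  obtain ⟨ι, U, ψ, hψ⟩ := h.exists_germ
  have h0 : ψ 0 = 0 := by
    have := hψ.alg 0
    rw [map_zero] at this
    exact this
  have h1 : ψ 1 = 1 := by
    have := hψ.alg 1
    rw [map_one] at this
    exact this
  refine ⟨ι, U, ⟨⟨⟨fun a => ψ a, h1⟩, fun a b => hψ.mul a a.2 b b.2⟩, h0,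
    fun a b => hψ.add a a.2 b b.2⟩, ?_, fun r => hψ.alg r⟩
  intro a b hab
  have hab' : (0 : R) < (b : R) - a := sub_pos.2 hab
  have e1 := hψ.pos _ (K.sub_mem b.2 a.2) hab'
  have e2 := hψ.add _ a.2 _ (K.sub_mem b.2 a.2)
  rw [add_sub_cancel] at e2
  change ψ a < ψ b
  rw [e2]
  exact lt_add_of_pos_right _ e1

theorem exists_good_of_point {K : Subfield R} (hK : ∀ r, algebraMap ℝ R r ∈ K)
    {ι : Type} {U : Ultrafilter ι} (j : K →+* Germ (U : Filter ι) ℝ)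
    (hjr : ∀ r : ℝ, j ⟨algebraMap ℝ R r, hK r⟩ = Germ.ofFun (fun _ => r))
    (t : R) (τ : Germ (U : Filter ι) ℝ)
    (hker : ∀ q : K[X], (q.map K.subtype).eval t = 0 → (q.map j).eval τ = 0)
    (E : Finset R) (hE : ∀ x ∈ E, ∃ q : K[X], (q.map K.subtype).eval t = x ∧
      (0 < x → 0 < (q.map j).eval τ)) : ∃ φ : R → ℝ, GoodOn φ (E : Set R) := by
  classical
  have hwd : ∀ p q : K[X], (p.map K.subtype).eval t = (q.map K.subtype).eval t →
      (p.map j).eval τ = (q.map j).eval τ := by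
    intro p q hpq
    have := hker (p - q) (by simp [hpq])
    rw [Polynomial.map_sub, eval_sub, sub_eq_zero] at this
    exact this
  have hex : ∀ x : R, ∃ y : Germ (U : Filter ι) ℝ, ∀ q : K[X], (q.map K.subtype).eval t = x →
      y = (q.map j).eval τ := by
    intro x
    by_cases hx : ∃ q : K[X], (q.map K.subtype).eval t = x
    · obtain ⟨q, rfl⟩ := hx
      exact ⟨_, fun p hp => hwd _ _ hp.symm⟩
    · exact ⟨0, fun q hq => absurd ⟨q, hq⟩ hx⟩
  choose ψ hψ using hex
  refine GGoodOn.exists_good (ψ := ψ) ⟨?_, ?_, ?_, ?_⟩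
  · intro r
    rw [hψ _ (C ⟨algebraMap ℝ R r, hK r⟩) (by simp), map_C, eval_C, hjr]
  · intro a ha b hb
    obtain ⟨p, hp, -⟩ := hE a ha
    obtain ⟨q, hq, -⟩ := hE b hb
    rw [hψ (a + b) (p + q) (by simp [hp, hq]), hψ a p hp, hψ b q hq]
    simp
  · intro a ha b hb
    obtain ⟨p, hp, -⟩ := hE a ha
    obtain ⟨q, hq, -⟩ := hE b hb
    rw [hψ (a * b) (p * q) (by simp [hp, hq]), hψ a p hp, hψ b q hq]
    simp
  · intro a ha hpos
    obtain ⟨p, hp, hp'⟩ := hE a ha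
    rw [hψ a p hp]
    exact hp' hpos

noncomputable def evSubring (K : Subfield R) (t : R) : Subring R := (eval₂RingHom K.subtype t).range

theorem mem_evSubring {K : Subfield R} {t x : R} :
    x ∈ evSubring K t ↔ ∃ q : K[X], (q.map K.subtype).eval t = x := by
  simp [evSubring, RingHom.mem_range, eval_map]

/-- transcendental step -/
theorem SG.step_trans (hR : PolyIVP R) {K : Subfield R} (h : SG (K : Set R))
    (hK : ∀ r, algebraMap ℝ R r ∈ K) (hroots : ∀ n, RootsIn K.subtype n)
    {t : R} (ht : t ∉ K) (ht1 : -1 < t) (ht2 : t < 1) : SG (evSubring K t : Set R) := by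
  classical
  obtain ⟨ι, U, j, hj, hjr⟩ := h.exists_hom hK
  have hi : StrictMono K.subtype := fun a b hab => hab
  intro E hE
  have hEx : ∀ x : R, ∃ q : K[X], x ∈ E → (q.map K.subtype).eval t = x := by
    intro x
    by_cases hx : x ∈ E
    · obtain ⟨q, hq⟩ := mem_evSubring.1 (hE hx)
      exact ⟨q, fun _ => hq⟩
    · exact ⟨0, fun h => absurd h hx⟩
  choose q hq using hEx
  let Z : Finset K := (E.biUnion fun x => (q x).roots.toFinset) ∪ {-1, 1}
  have htr : t ∉ Set.range K.subtype := by
    rintro ⟨z, rfl⟩; exact ht z.2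
  obtain ⟨u, v, hu, hv, hadj⟩ := exists_adjacent K.subtype hi Z htr
    ⟨-1, by simp [Z], by simpa using ht1⟩ ⟨1, by simp [Z], by simpa using ht2⟩
  obtain ⟨w, hw1, hw2⟩ := exists_between (hi.lt_iff_lt.1 (hu.trans hv))
  refine exists_good_of_point hK j hjr t (j w) ?_ E ?_
  · intro p hp
    by_cases hp0 : p = 0
    · simp [hp0]
    · exact absurd (hroots (p.natDegree + 1) p hp0 (Nat.lt_succ_self _) t hp) htr
  · intro x hx
    refine ⟨q x, hq x hx, fun hpos => ?_⟩
    have hq0 : q x ≠ 0 := by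
      intro h0
      have := hq x hx
      rw [h0] at this
      simp at this
      exact hpos.ne this
    refine (hroots ((q x).natDegree + 1)).pos_transfer hi hj hR germ_polyIVP (q x)
      (Nat.lt_succ_self _) (u := u) (v := v) (x := t) ?_ hu hv (hj hw1) (hj hw2) (by rwa [hq x hx])
    intro z hz
    refine hadj z ?_
    simp only [Z, Finset.mem_union, Finset.mem_biUnion]
    exact Or.inl ⟨x, hx, by simp [hq0, hz]⟩

theorem SG.step_alg (hR : PolyIVP R) {K : Subfield R} (h : SG (K : Set R))
    (hK : ∀ r, algebraMap ℝ R r ∈ K) (g : K[X]) (hg0 : g ≠ 0)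
    (hroots : RootsIn K.subtype g.natDegree)
    {t : R} (ht : t ∉ K) (hgt : (g.map K.subtype).eval t = 0) : SG (evSubring K t : Set R) := by
  classical
  obtain ⟨ι, U, j, hj, hjr⟩ := h.exists_hom hK
  have hi : StrictMono K.subtype := fun a b hab => hab
  have htr : t ∉ Set.range K.subtype := by
    rintro ⟨z, rfl⟩; exact ht z.2
  have hd : g.natDegree ≠ 0 := by
    intro hd
    rw [eq_C_of_natDegree_eq_zero hd] at hgt hg0
    simp at hgt
    simp [hgt] at hg0
  have hder0 : derivative g ≠ 0 := fun h => hd (derivative_eq_zero.1 h)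
  have hderd : (derivative g).natDegree < g.natDegree := natDegree_derivative_lt hd
  have hmod : ∀ p : K[X], ((p % g).map K.subtype).eval t = (p.map K.subtype).eval t := by
    intro p
    conv_rhs => rw [← EuclideanDomain.mod_add_div p g]
    simp [hgt]
  have hmodd : ∀ p : K[X], (p % g).natDegree < g.natDegree := fun p => natDegree_mod_lt p hd
  intro E hE
  have hEx : ∀ x : R, ∃ q : K[X], x ∈ E → (q.map K.subtype).eval t = x ∧ q.natDegree < g.natDegree := by
    intro x
    by_cases hx : x ∈ E
    · obtain ⟨q, hq⟩ := mem_evSubring.1 (hE hx)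
      exact ⟨q % g, fun _ => ⟨(hmod q).trans hq, hmodd q⟩⟩
    · exact ⟨0, fun h => absurd h hx⟩
  choose q hq using hEx
  obtain ⟨B, hB1, hB2⟩ := exists_root_bound K.subtype hi g hg0 hgt
  let Z : Finset K := (E.biUnion fun x => (q x).roots.toFinset) ∪ (derivative g).roots.toFinset ∪ {-B, B}
  obtain ⟨u, v, hu, hv, hadj⟩ := exists_adjacent K.subtype hi Z htr
    ⟨-B, by simp [Z], hB1⟩ ⟨B, by simp [Z], hB2⟩
  have hsc := hR.sign_change (g.map K.subtype)
    ((Polynomial.map_ne_zero_iff K.subtype.injective).2 hg0) hu hv hgt (by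
      intro z h1 h2 h3
      rw [derivative_map] at h3
      obtain ⟨y, rfl⟩ := hroots _ hder0 hderd z h3
      rw [eval_map_apply, map_eq_zero] at h3
      refine hadj y ?_ ⟨hi.lt_iff_lt.1 h1, hi.lt_iff_lt.1 h2⟩
      simp [Z, hder0, h3])
  rw [eval_map_apply, eval_map_apply, ← map_mul, ← map_zero K.subtype] at hsc
  have hsc' := hi.lt_iff_lt.1 hsc
  obtain ⟨τ, hτ1, hτ2, hτ3⟩ := (germ_polyIVP (U := U)).mul_neg (g.map j)
    (hj (hi.lt_iff_lt.1 (hu.trans hv))) (by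
      rw [eval_map_apply, eval_map_apply, ← map_mul, ← map_zero j]
      exact hj hsc')
  refine exists_good_of_point hK j hjr t τ ?_ E ?_
  · intro p hp
    have h0 : p % g = 0 := by
      by_contra h0
      exact htr (hroots _ h0 (hmodd p) t ((hmod p).trans hp))
    rw [← EuclideanDomain.mod_add_div p g, h0]
    simp [hτ3]
  · intro x hx
    refine ⟨q x, (hq x hx).1, fun hpos => ?_⟩
    have hq0 : q x ≠ 0 := by
      intro h0
      have := (hq x hx).1
      rw [h0] at this
      simp at this
      exact hpos.ne this
    refine hroots.pos_transfer hi hj hR germ_polyIVP (q x)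
      (hq x hx).2 (u := u) (v := v) (x := t) ?_ hu hv hτ1 hτ2 (by rwa [(hq x hx).1])
    intro z hz
    refine hadj z ?_
    simp only [Z, Finset.mem_union, Finset.mem_biUnion]
    exact Or.inl (Or.inl ⟨x, hx, by simp [hq0, hz]⟩)

theorem SG.step (hR : PolyIVP R) {K : Subfield R} (h : SG (K : Set R))
    (hK : ∀ r, algebraMap ℝ R r ∈ K) (hne : ∃ t, t ∉ K) :
    ∃ t, t ∉ K ∧ SG (evSubring K t : Set R) := by
  classical
  by_cases hcase : ∃ n, ∃ g : K[X], g ≠ 0 ∧ g.natDegree = n ∧ ∃ t, t ∉ K ∧ (g.map K.subtype).eval t = 0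
  · obtain ⟨g, hg0, hgn, t, ht, hgt⟩ := Nat.find_spec hcase
    refine ⟨t, ht, h.step_alg hR hK g hg0 ?_ ht hgt⟩
    intro q hq hqn x hx
    by_contra hx'
    exact Nat.find_min hcase (hgn ▸ hqn) ⟨q, hq, rfl, x, fun h => hx' ⟨⟨x, h⟩, rfl⟩, hx⟩
  · have hroots : ∀ n, RootsIn K.subtype n := by
      intro n q hq hqn x hx
      by_contra hx'
      exact hcase ⟨_, q, hq, rfl, x, fun h => hx' ⟨⟨x, h⟩, rfl⟩, hx⟩
    obtain ⟨t, ht⟩ := hne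
    rcases lt_trichotomy |t| 1 with h1 | h1 | h1
    · exact ⟨t, ht, h.step_trans hR hK hroots ht (abs_lt.1 h1).1 (abs_lt.1 h1).2⟩
    · exfalso
      rcases eq_or_eq_neg_of_abs_eq h1 with rfl | rfl
      · exact ht K.one_mem
      · exact ht (K.neg_mem K.one_mem)
    · have h2 : |t⁻¹| < 1 := by rw [abs_inv]; exact inv_lt_one_of_one_lt₀ h1
      have ht' : t⁻¹ ∉ K := fun h => ht (by simpa using K.inv_mem h)
      exact ⟨t⁻¹, ht', h.step_trans hR hK hroots ht' (abs_lt.1 h2).1 (abs_lt.1 h2).2⟩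

theorem algebraMap_pos' {r : ℝ} (hr : 0 < r) : 0 < algebraMap ℝ R r := by
  have : algebraMap ℝ R r = algebraMap ℝ R (Real.sqrt r) * algebraMap ℝ R (Real.sqrt r) := by
    rw [← map_mul, Real.mul_self_sqrt hr.le]
  rw [this]
  exact mul_self_pos.2 (by simpa using (Real.sqrt_pos.2 hr).ne')

theorem SG.base : SG ((algebraMap ℝ R).fieldRange : Set R) := by
  classical
  intro E hE
  refine ⟨Function.invFun (algebraMap ℝ R), ?_⟩
  have hl := Function.leftInverse_invFun (algebraMap ℝ R).injective
  refine ⟨hl, ?_, ?_, ?_⟩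
  · intro a ha b hb
    obtain ⟨a, rfl⟩ := hE ha
    obtain ⟨b, rfl⟩ := hE hb
    rw [← map_add, hl, hl, hl]
  · intro a ha b hb
    obtain ⟨a, rfl⟩ := hE ha
    obtain ⟨b, rfl⟩ := hE hb
    rw [← map_mul, hl, hl, hl]
  · intro a ha hpos
    obtain ⟨a, rfl⟩ := hE ha
    rw [hl]
    by_contra hneg
    rcases (not_lt.1 hneg).eq_or_lt with rfl | h'
    · simp at hpos
    · have := algebraMap_pos' (R := R) (neg_pos.2 h')
      rw [map_neg] at this
      linarith

theorem SG.top (hR : PolyIVP R) : SG (Set.univ : Set R) := by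
  classical
  let S : Set (Subfield R) := {K | (algebraMap ℝ R).fieldRange ≤ K ∧ SG (K : Set R)}
  obtain ⟨K, hK0, hKmax⟩ := zorn_le_nonempty₀ S (by
    intro c hc hch y hy
    have hdir : DirectedOn (· ≤ ·) c := hch.directedOn
    refine ⟨sSup c, ⟨(hc hy).1.trans (le_sSup hy), ?_⟩, fun z hz => le_sSup hz⟩
    intro E hE
    have : ∀ E : Finset R, (E : Set R) ⊆ (sSup c : Subfield R) → ∃ z ∈ c, (E : Set R) ⊆ (z : Set R) := by
      intro E
      induction E using Finset.induction_on with
      | empty => exact fun _ => ⟨y, hy, by simp⟩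
      | insert a E ha ih =>
        intro hE
        simp only [Finset.coe_insert, Set.insert_subset_iff] at hE
        obtain ⟨z, hz, hz'⟩ := ih hE.2
        obtain ⟨w, hw, hw'⟩ := (Subfield.mem_sSup_of_directedOn ⟨y, hy⟩ hdir).1 hE.1
        obtain ⟨x, hx, h1, h2⟩ := hdir z hz w hw
        refine ⟨x, hx, ?_⟩
        simp only [Finset.coe_insert, Set.insert_subset_iff]
        exact ⟨h2 hw', hz'.trans h1⟩
    obtain ⟨z, hz, hz'⟩ := this E hE
    exact (hc hz).2 E hz') (algebraMap ℝ R).fieldRange ⟨le_rfl, SG.base⟩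
  obtain ⟨⟨hK1, hK2⟩, hKmax⟩ := hKmax
  by_cases hne : ∃ t, t ∉ K
  · exfalso
    have hK : ∀ r, algebraMap ℝ R r ∈ K := fun r => hK1 ⟨r, rfl⟩
    obtain ⟨t, ht, hS⟩ := hK2.step hR hK hne
    have hKe : ∀ x ∈ K, x ∈ evSubring K t := fun x hx => mem_evSubring.2 ⟨C ⟨x, hx⟩, by simp⟩
    have hte : t ∈ evSubring K t := mem_evSubring.2 ⟨X, by simp⟩
    have hF := hS.frac (fun r => hKe _ (hK r))
    let L : Subfield R := Subfield.closure (evSubring K t : Set R)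
    have hL : SG (L : Set R) := hF.mono (by
      intro x hx
      obtain ⟨y, hy, z, hz, rfl⟩ := Subfield.mem_closure_iff.1 hx
      rw [Subring.closure_eq] at hy hz
      rcases lt_trichotomy z 0 with h | h | h
      · exact ⟨-y, Subring.neg_mem _ hy, -z, Subring.neg_mem _ hz, neg_pos.2 h, by rw [neg_div_neg_eq]⟩
      · exact ⟨0, Subring.zero_mem _, 1, Subring.one_mem _, one_pos, by simp [h]⟩
      · exact ⟨y, hy, z, hz, h, rfl⟩)
    have hKL : K ≤ L := fun x hx => Subfield.subset_closure (hKe x hx)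
    exact ht (hKmax ⟨hK1.trans hKL, hL⟩ hKL (Subfield.subset_closure hte))
  · push Not at hne
    exact hK2.mono (fun x _ => hne x)

theorem exists_hom_germ (hR : PolyIVP R) : 
    ∃ (ι : Type) (U : Ultrafilter ι) (j : R →+* Germ (U : Filter ι) ℝ), Monotone j ∧
      ∀ r : ℝ, j (algebraMap ℝ R r) = Germ.ofFun (fun _ => r) := by
  obtain ⟨ι, U, j, hj, hjr⟩ := SG.exists_hom (K := ⊤) ((SG.top hR).mono (Set.subset_univ _))
    (fun r => Subfield.mem_top _)
  exact ⟨ι, U, j.comp (Subfield.topEquiv (K := R)).symm.toRingHom,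
    fun a b hab => hj.monotone hab, fun r => hjr r⟩
end AL2

end

section

open Filter

theorem mem_KSet_of_gen {A : Type*} [CommRing A] [Algebra ℝ A] {S : Set A} (χ : A →ₐ[ℝ] ℝ)
    (h : ∀ a ∈ S, 0 ≤ χ a) : χ ∈ KSet S := by
  intro a ha
  induction ha with
  | sq a => rw [map_pow]; positivity
  | gen ha => exact h _ ha
  | add _ _ h1 h2 => rw [map_add]; exact add_nonneg h1 h2
  | mul _ _ h1 h2 => rw [map_mul]; exact mul_nonneg h1 h2

theorem exists_char_of_germ {A : Type} [CommRing A] [Algebra ℝ A] (hfg : Algebra.FiniteType ℝ A)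
    {ι : Type} {U : Ultrafilter ι} (F : A →+* Germ (U : Filter ι) ℝ)
    (hF : ∀ r : ℝ, F (algebraMap ℝ A r) = Germ.ofFun (fun _ => r)) {S : Set A} (hS : S.Finite)
    (hpos : ∀ a ∈ S, 0 ≤ F a) : ∃ χ : A →ₐ[ℝ] ℝ, ∀ a ∈ S, 0 ≤ χ a := by
  classical
  obtain ⟨n, g, hg⟩ := Algebra.FiniteType.iff_quotient_mvPolynomial''.1 hfg
  choose x hx using fun k : Fin n => Quotient.exists_rep (F (g (MvPolynomial.X k)))
  have key : ∀ p : MvPolynomial (Fin n) ℝ,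
      F (g p) = Germ.ofFun (fun i => MvPolynomial.aeval (fun k => x k i) p) := by
    intro p
    induction p using MvPolynomial.induction_on with
    | C r =>
      have : g (MvPolynomial.C r) = algebraMap ℝ A r := by
        rw [← MvPolynomial.algebraMap_eq, AlgHom.commutes]
      rw [this, hF]
      simp
    | add p q hp hq =>
      rw [map_add, map_add, hp, hq]
      simp only [map_add]
      rfl
    | mul_X p k hp =>
      rw [map_mul, map_mul, hp, ← hx]
      simp only [map_mul, MvPolynomial.aeval_X]
      rfl
  obtain ⟨G, hG⟩ := (IsNoetherian.noetherian (RingHom.ker g.toRingHom) : Submodule.FG _)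
  have h1 : ∀ᶠ i in (U : Filter ι), ∀ p ∈ G, MvPolynomial.aeval (fun k => x k i) p = (0 : ℝ) := by
    refine (eventually_all_finset G).2 fun p hp => ?_
    have hp' : g p = 0 := by
      have : p ∈ RingHom.ker g.toRingHom := by rw [← hG]; exact Submodule.subset_span hp
      exact this
    have := key p
    rw [hp', map_zero] at this
    exact Germ.coe_eq.1 this.symm
  choose l hl using hg
  have h2 : ∀ᶠ i in (U : Filter ι), ∀ a ∈ hS.toFinset,
      (0 : ℝ) ≤ MvPolynomial.aeval (fun k => x k i) (l a) := by
    refine (eventually_all_finset _).2 fun a ha => ?_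
    have := hpos a (hS.mem_toFinset.1 ha)
    rw [← hl a, key] at this
    exact Germ.coe_le.1 this
  obtain ⟨i, h1, h2⟩ := (h1.and h2).exists
  let ev : MvPolynomial (Fin n) ℝ →ₐ[ℝ] ℝ := MvPolynomial.aeval (fun k => x k i)
  have hker : RingHom.ker g.toRingHom ≤ RingHom.ker ev.toRingHom := by
    rw [← hG]
    exact Submodule.span_le.2 fun p hp => h1 p hp
  have hev : ∀ p q, g p = g q → ev p = ev q := by
    intro p q hpq
    have : p - q ∈ RingHom.ker g.toRingHom := by
      change g (p - q) = 0
      rw [map_sub, hpq, sub_self]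
    have : ev (p - q) = 0 := hker this
    rwa [map_sub, sub_eq_zero] at this
  let χ : A →ₐ[ℝ] ℝ :=
    { toFun := fun a => ev (l a)
      map_one' := by rw [← map_one ev]; exact hev _ _ (by rw [hl, map_one])
      map_mul' := fun a b => by rw [← map_mul ev]; exact hev _ _ (by simp [hl])
      map_zero' := by rw [← map_zero ev]; exact hev _ _ (by rw [hl, map_zero])
      map_add' := fun a b => by rw [← map_add ev]; exact hev _ _ (by simp [hl])
      commutes' := fun r => by rw [← AlgHom.commutes ev]; exact hev _ _ (by rw [hl, AlgHom.commutes]) }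
  exact ⟨χ, fun a ha => h2 a (hS.mem_toFinset.2 ha)⟩

theorem neg_one_mem_of_no_char {A : Type} [CommRing A] [Algebra ℝ A]
    (hfg : Algebra.FiniteType ℝ A) {S : Set A} (hS : S.Finite)
    (hno : ∀ χ : A →ₐ[ℝ] ℝ, ¬ ∀ a ∈ S, 0 ≤ χ a) : IsInPreordering S (-1) := by
  by_contra hcon
  have hT : PreOrd {a | IsInPreordering S a} :=
    ⟨fun a ha b hb => ha.add hb, fun a ha b hb => ha.mul hb,
      fun a => by rw [← pow_two]; exact IsInPreordering.sq a, hcon⟩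
  obtain ⟨R, _, _, _, π, hR, hpos⟩ := exists_rcf hT
  letI : Algebra ℝ R := (π.comp (algebraMap ℝ A)).toAlgebra
  obtain ⟨ι, U, j, hj, hjr⟩ := exists_hom_germ hR
  obtain ⟨χ, hχ⟩ := exists_char_of_germ hfg (j.comp π) (fun r => hjr r) hS
    (fun a ha => by
      rw [← map_zero (j.comp π), RingHom.comp_apply, RingHom.comp_apply]
      exact hj (by rw [map_zero]; exact hpos a (.gen ha)))
  exact hno χ hχ

end

section

open Filter Topology

theorem seq_bound (m : ℕ → ℝ) (h0 : ∀ n, 0 ≤ m n) (hcs : ∀ n, m (n + 1) ^ 2 ≤ m n * m (n + 2))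
    {c D : ℝ} (hc : 0 < c) (hb : ∀ n, m n ≤ c ^ n * D) : m 1 ≤ c * m 0 := by
  by_contra hcon
  push Not at hcon
  have hm0 : 0 < m 0 := by
    refine lt_of_le_of_ne (h0 0) fun h => ?_
    have h1 := hcs 0
    rw [← h] at h1 hcon
    simp at h1 hcon
    nlinarith
  set q := m 1 / m 0 with hq
  have hqc : c < q := by rwa [hq, lt_div_iff₀ hm0]
  have hq0 : 0 < q := hc.trans hqc
  have key : ∀ n, 0 < m n ∧ q * m n ≤ m (n + 1) := by
    intro n
    induction n with
    | zero => exact ⟨hm0, by rw [hq, div_mul_cancel₀ _ hm0.ne']⟩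
    | succ n ih =>
      obtain ⟨h1, h2⟩ := ih
      have h3 : 0 < m (n + 1) := lt_of_lt_of_le (mul_pos hq0 h1) h2
      refine ⟨h3, ?_⟩
      have h4 := hcs n
      have h5 : m n * (q * m (n + 1)) ≤ m n * m (n + 2) := by nlinarith
      exact le_of_mul_le_mul_left h5 h1
  have hpow : ∀ n, q ^ n * m 0 ≤ m n := by
    intro n
    induction n with
    | zero => simp
    | succ n ih =>
      have := (key n).2
      calc q ^ (n + 1) * m 0 = q * (q ^ n * m 0) := by ring
        _ ≤ q * m n := mul_le_mul_of_nonneg_left ih hq0.le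
        _ ≤ _ := this
  have hr : 1 < q / c := by rwa [lt_div_iff₀ hc, one_mul]
  obtain ⟨n, hn⟩ := pow_unbounded_of_one_lt (D / m 0) hr
  rw [div_pow, div_lt_div_iff₀ hm0 (pow_pos hc n)] at hn
  have := (hpow n).trans (hb n)
  linarith [mul_comm D (c ^ n)]

set_option linter.unusedSectionVars false
section PO
variable {A : Type} [CommRing A] [Algebra ℝ A]

theorem IsInPreordering.smul {S : Set A} {a : A} (ha : IsInPreordering S a) {r : ℝ} (hr : 0 ≤ r) :
    IsInPreordering S (r • a) := by
  have : r • a = (algebraMap ℝ A (Real.sqrt r)) ^ 2 * a := by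
    rw [← map_pow, Real.sq_sqrt hr, Algebra.smul_def]
  rw [this]
  exact (IsInPreordering.sq _).mul ha

theorem IsInPreordering.one (S : Set A) : IsInPreordering S (1 : A) := by
  simpa using IsInPreordering.sq (S := S) (1 : A)

theorem IsInPreordering.zero (S : Set A) : IsInPreordering S (0 : A) := by
  simpa using IsInPreordering.sq (S := S) (0 : A)

theorem IsInPreordering.insert_decomp {S : Set A} {p a : A} (ha : IsInPreordering (insert p S) a) :
    ∃ s t, IsInPreordering S s ∧ IsInPreordering S t ∧ a = s + t * p := by
  induction ha with
  | sq a => exact ⟨a ^ 2, 0, .sq a, .zero S, by ring⟩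
  | gen ha =>
    rcases ha with rfl | ha
    · exact ⟨0, 1, .zero S, .one S, by ring⟩
    · exact ⟨_, 0, .gen ha, .zero S, by ring⟩
  | add _ _ h1 h2 =>
    obtain ⟨s, t, hs, ht, rfl⟩ := h1
    obtain ⟨s', t', hs', ht', rfl⟩ := h2
    exact ⟨_, _, hs.add hs', ht.add ht', by ring⟩
  | mul _ _ h1 h2 =>
    obtain ⟨s, t, hs, ht, rfl⟩ := h1
    obtain ⟨s', t', hs', ht', rfl⟩ := h2
    exact ⟨s * s' + (t * t') * p ^ 2, s * t' + s' * t, (hs.mul hs').add ((ht.mul ht').mul (.sq p)),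
      (hs.mul ht').add (hs'.mul ht), by ring⟩

theorem psd_cs (M : A →ₗ[ℝ] ℝ) (hM : ∀ a, 0 ≤ M (a ^ 2)) (x y : A) :
    M (x * y) ^ 2 ≤ M (x ^ 2) * M (y ^ 2) := by
  have key : ∀ r : ℝ, 0 ≤ M (x ^ 2) * (r * r) + (2 * M (x * y)) * r + M (y ^ 2) := by
    intro r
    have := hM (r • x + y)
    have e : (r • x + y) ^ 2 = (r * r) • x ^ 2 + (2 * r) • (x * y) + y ^ 2 := by
      simp only [Algebra.smul_def, map_mul, map_ofNat]; ring
    rw [e, map_add, map_add, map_smul, map_smul, smul_eq_mul, smul_eq_mul] at this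
    linarith
  have := discrim_le_zero key
  rw [discrim] at this
  linarith

theorem mul_bound {S : Set A} (L : A →ₗ[ℝ] ℝ) (hL : ∀ a, IsInPreordering S a → 0 ≤ L a)
    {c : ℝ} (hc : 0 < c) (h s t : A) (hs : IsInPreordering S s) (ht : IsInPreordering S t)
    (hst : c • t = 1 + s + t * h ^ 2) {a : A} (ha : IsInPreordering S a) :
    L (a * h ^ 2) ≤ c * L a := by
  have hP : ∀ n : ℕ, IsInPreordering S (c ^ (n + 1) • t - h ^ (2 * n)) := by
    intro n
    induction n with
    | zero =>
      have : c ^ (0 + 1) • t - h ^ (2 * 0) = s + t * h ^ 2 := by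
        rw [zero_add, pow_one, hst]; ring
      rw [this]
      exact hs.add (ht.mul (.sq h))
    | succ n ih =>
      have : c ^ (n + 1 + 1) • t - h ^ (2 * (n + 1)) =
          c ^ (n + 1) • (1 + s) + h ^ 2 * (c ^ (n + 1) • t - h ^ (2 * n)) := by
        rw [pow_succ c (n + 1), mul_smul, hst]
        simp only [Algebra.smul_def]
        ring
      rw [this]
      exact (((IsInPreordering.one S).add hs).smul (by positivity)).add ((IsInPreordering.sq h).mul ih)
  have hm := seq_bound (fun n => L (a * h ^ (2 * n))) ?_ ?_ hc (D := c * L (t * a)) ?_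
  · simpa using hm
  · intro n
    apply hL
    rw [mul_comm 2 n, pow_mul]
    exact ha.mul (.sq _)
  · intro n
    have := psd_cs (L.comp (LinearMap.mulLeft ℝ a)) (fun x => by
      simpa using hL _ (ha.mul (.sq x))) (h ^ n) (h ^ (n + 2))
    simp only [LinearMap.comp_apply, LinearMap.mulLeft_apply] at this
    convert this using 3 <;> ring_nf
  · intro n
    have := hL _ (ha.mul (hP n))
    rw [mul_sub, map_sub, mul_smul_comm, map_smul, smul_eq_mul, mul_comm a t] at this
    have e : c ^ n * (c * L (t * a)) = c ^ (n + 1) * L (t * a) := by ring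
    rw [e]
    linarith

theorem exists_cert (hfg : Algebra.FiniteType ℝ A) {S : Set A} (hS : S.Finite) (h : A) {c : ℝ}
    (hb : ∀ χ ∈ KSet S, χ h ^ 2 < c) :
    ∃ s t, IsInPreordering S s ∧ IsInPreordering S t ∧ c • t = 1 + s + t * h ^ 2 := by
  have := neg_one_mem_of_no_char hfg (hS.insert (h ^ 2 - algebraMap ℝ A c)) (by
    intro χ hχ
    have h1 := hb χ (mem_KSet_of_gen χ fun a ha => hχ a (Set.mem_insert_of_mem _ ha))
    have h2 := hχ _ (Set.mem_insert _ _)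
    rw [map_sub, map_pow, AlgHom.commutes] at h2
    have : algebraMap ℝ ℝ c = c := rfl
    rw [this] at h2
    linarith)
  obtain ⟨s, t, hs, ht, hst⟩ := this.insert_decomp
  refine ⟨s, t, hs, ht, ?_⟩
  rw [Algebra.smul_def]
  linear_combination hst

theorem lin_bound {S : Set A} (L : A →ₗ[ℝ] ℝ) 
    {C : ℝ} (hC : 0 < C) (h : A) (hL : ∀ a, IsInPreordering S a → 0 ≤ L a)
    (hq : ∀ a, IsInPreordering S a → L (a * h ^ 2) ≤ C ^ 2 * L a) {a : A}
    (ha : IsInPreordering S a) : 0 ≤ L ((C • 1 + h) * a) ∧ 0 ≤ L ((C • 1 - h) * a) := by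
  have h1 := hL _ ((IsInPreordering.sq (C • 1 + h)).mul ha)
  have h2 := hL _ ((IsInPreordering.sq (C • 1 - h)).mul ha)
  have h3 := hq a ha
  have e1 : (C • 1 + h) ^ 2 * a = (2 * C) • ((C • 1 + h) * a) - (C ^ 2 • a - a * h ^ 2) := by
    simp only [Algebra.smul_def, map_mul, map_pow, map_ofNat]; ring
  have e2 : (C • 1 - h) ^ 2 * a = (2 * C) • ((C • 1 - h) * a) - (C ^ 2 • a - a * h ^ 2) := by
    simp only [Algebra.smul_def, map_mul, map_pow, map_ofNat]; ring
  rw [e1, map_sub, map_sub, map_smul, map_smul, smul_eq_mul, smul_eq_mul] at h1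
  rw [e2, map_sub, map_sub, map_smul, map_smul, smul_eq_mul, smul_eq_mul] at h2
  constructor
  · have : 0 ≤ (2 * C) * L ((C • 1 + h) * a) := by linarith
    exact nonneg_of_mul_nonneg_right this (by positivity)
  · have : 0 ≤ (2 * C) * L ((C • 1 - h) * a) := by linarith
    exact nonneg_of_mul_nonneg_right this (by positivity)

end PO

end

section

open Filter Topology MeasureTheory

theorem fibre_nonneg {A : Type} [CommRing A] [Algebra ℝ A] (hfg : Algebra.FiniteType ℝ A)
    {k m : ℕ} (f : Fin k → A) (h : Fin m → A)
    (hfib : ∀ lam : Fin m → ℝ,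
      (∃ χ ∈ KSet (Set.range f), ∀ j : Fin m, χ (h j) = lam j) →
      ∃ (B : MPAlgebra)
        (ρ : B.carrier →ₐ[ℝ]
          (A ⧸ Ideal.span (Set.range fun j : Fin m => h j - algebraMap ℝ A (lam j)))),
        Function.Surjective ρ)
    (E : A →ₗ[ℝ] ℝ) (hE : ∀ a : A, IsInPreordering (Set.range f) a → 0 ≤ E a)
    (lam : Fin m → ℝ) (hlam : ∀ j a, E (h j * a) = lam j * E a)
    (p : A) (hp : ∀ χ : A →ₐ[ℝ] ℝ, 0 ≤ χ p) : 0 ≤ E p := by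
  classical
  set I : Ideal A := Ideal.span (Set.range fun j : Fin m => h j - algebraMap ℝ A (lam j)) with hI
  have hEI' : ∀ a ∈ I, ∀ b, E (b * a) = 0 := by
    intro a ha
    induction ha using Submodule.span_induction with
    | mem x hx =>
      obtain ⟨j, rfl⟩ := hx
      intro b
      have := hlam j b
      dsimp only
      rw [mul_sub, map_sub, mul_comm b, this, mul_comm b, ← Algebra.smul_def, map_smul,
        smul_eq_mul, sub_self]
    | zero => intro b; simp
    | add x y _ _ hx hy => intro b; rw [mul_add, map_add, hx, hy, add_zero]
    | smul a x hx hx0 => intro b; rw [smul_eq_mul, ← mul_assoc]; exact hx0 _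
  have hEI : ∀ a ∈ I, E a = 0 := fun a ha => by simpa using hEI' a ha 1
  by_cases hlk : ∃ χ ∈ KSet (Set.range f), ∀ j : Fin m, χ (h j) = lam j
  · obtain ⟨B, ρ, hρ⟩ := hfib lam hlk
    have hwd : ∀ a b : A, Ideal.Quotient.mk I a = Ideal.Quotient.mk I b → E a = E b := by
      intro a b hab
      have := hEI _ (Ideal.Quotient.eq.1 hab)
      rwa [map_sub, sub_eq_zero] at this
    choose l hl using fun b : B.carrier => Ideal.Quotient.mk_surjective (I := I) (ρ b)
    let LB : B.carrier →ₗ[ℝ] ℝ :=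
      { toFun := fun b => E (l b)
        map_add' := fun a b => by
          rw [← map_add]; exact hwd _ _ (by rw [hl, map_add, map_add, hl, hl])
        map_smul' := fun r b => by
          rw [RingHom.id_apply, ← map_smul]
          refine hwd _ _ ?_
          rw [hl, map_smul, ← hl b]
          rfl }
    have hLB : ∀ b a, ρ b = Ideal.Quotient.mk I a → LB b = E a := fun b a hba =>
      hwd _ _ (by rw [hl, hba])
    obtain ⟨μ, hμ⟩ := B.mp LB (fun b => by
      rw [hLB (b ^ 2) (l b ^ 2) (by rw [map_pow, map_pow, hl])]
      exact hE _ (.sq _))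
    have := B.fg
    have : IsNoetherianRing B.carrier := Algebra.FiniteType.isNoetherianRing ℝ _
    obtain ⟨G, hG⟩ := (IsNoetherian.noetherian (RingHom.ker ρ.toRingHom) : Submodule.FG _)
    have hae : ∀ᵐ χ ∂μ, ∀ g ∈ G, χ g = 0 := by
      refine (eventually_all_finset G).2 fun g hg => ?_
      have hg0 : ρ g = 0 := by
        have : g ∈ RingHom.ker ρ.toRingHom := by rw [← hG]; exact Submodule.subset_span hg
        exact this
      have h1 : ∫ χ : B.carrier →ₐ[ℝ] ℝ, χ (g ^ 2) ∂μ = 0 := by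
        rw [← (hμ (g ^ 2)).2, hLB (g ^ 2) 0 (by rw [map_pow, hg0, map_zero]; simp), map_zero]
      rw [integral_eq_zero_iff_of_nonneg (fun χ => by
        change 0 ≤ χ (g ^ 2)
        rw [map_pow]; positivity) (hμ (g ^ 2)).1] at h1
      filter_upwards [h1] with χ hχ
      change χ (g ^ 2) = 0 at hχ
      rw [map_pow] at hχ
      exact eq_zero_of_pow_eq_zero hχ
    obtain ⟨b, hb⟩ := hρ (Ideal.Quotient.mk I p)
    rw [← hLB b p hb, (hμ b).2]
    refine integral_nonneg_of_ae ?_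
    filter_upwards [hae] with χ hχ
    have hker : RingHom.ker ρ.toRingHom ≤ RingHom.ker χ.toRingHom := by
      rw [← hG]
      exact Submodule.span_le.2 fun g hg => hχ g hg
    have h2 := hp ((AlgHom.liftOfSurjective ρ hρ χ hker).comp (Ideal.Quotient.mkₐ ℝ I))
    rw [AlgHom.comp_apply, Ideal.Quotient.mkₐ_eq_mk, ← hb, AlgHom.liftOfSurjective_apply] at h2
    exact h2
  · have hE1 : E 1 = 0 := by
      refine le_antisymm ?_ (hE 1 (.one _))
      let S : Set A := Set.range f ∪ ((Set.range fun j : Fin m => h j - algebraMap ℝ A (lam j)) ∪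
        (Set.range fun j : Fin m => -(h j - algebraMap ℝ A (lam j))))
      have hSfin : S.Finite := (Set.finite_range _).union ((Set.finite_range _).union (Set.finite_range _))
      have hneg := neg_one_mem_of_no_char hfg hSfin (by
        intro χ hχ
        refine hlk ⟨χ, mem_KSet_of_gen χ fun a ha => hχ a (Or.inl ha), fun j => ?_⟩
        have h1 := hχ _ (Or.inr (Or.inl ⟨j, rfl⟩))
        have h2 := hχ _ (Or.inr (Or.inr ⟨j, rfl⟩))
        dsimp only at h1 h2
        rw [map_neg] at h2
        rw [map_sub, AlgHom.commutes] at h1 h2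
        have e : algebraMap ℝ ℝ (lam j) = lam j := rfl
        rw [e] at h1 h2
        linarith)
      have hdec : ∀ a, IsInPreordering S a → ∃ t, IsInPreordering (Set.range f) t ∧ a - t ∈ I := by
        intro a ha
        induction ha with
        | sq a => exact ⟨a ^ 2, .sq a, by simp⟩
        | gen ha =>
          rcases ha with ha | ha | ha
          · exact ⟨_, .gen ha, by simp⟩
          · exact ⟨0, .zero _, by simpa using Ideal.subset_span ha⟩
          · obtain ⟨j, rfl⟩ := ha
            refine ⟨0, .zero _, ?_⟩
            rw [sub_zero]
            exact I.neg_mem (Ideal.subset_span ⟨j, rfl⟩)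
        | add _ _ h1 h2 =>
          obtain ⟨s, hs, hs'⟩ := h1
          obtain ⟨t, ht, ht'⟩ := h2
          refine ⟨s + t, hs.add ht, ?_⟩
          rw [add_sub_add_comm]
          exact I.add_mem hs' ht'
        | @mul a b _ _ h1 h2 =>
          obtain ⟨s, hs, hs'⟩ := h1
          obtain ⟨t, ht, ht'⟩ := h2
          refine ⟨s * t, hs.mul ht, ?_⟩
          have e : a * b - s * t = b * (a - s) + s * (b - t) := by ring
          rw [e]
          exact I.add_mem (I.mul_mem_left _ hs') (I.mul_mem_left _ ht')
      obtain ⟨t, ht, ht'⟩ := hdec _ hneg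
      have h3 := hEI _ ht'
      have h4 := hE t ht
      rw [map_sub, map_neg] at h3
      linarith
    have h5 := psd_cs E (fun a => hE _ (.sq a)) 1 p
    rw [one_mul, one_pow, hE1, zero_mul] at h5
    exact (pow_eq_zero_iff two_ne_zero |>.1 (le_antisymm h5 (sq_nonneg _))).ge

end

section

open Filter Topology MeasureTheory

theorem exists_countable_span {A : Type} [CommRing A] [Algebra ℝ A]
    (hfg : Algebra.FiniteType ℝ A) : ∃ e : ℕ → A, Submodule.span ℝ (Set.range e) = ⊤ := by
  obtain ⟨n, g, hg⟩ := Algebra.FiniteType.iff_quotient_mvPolynomial''.1 hfg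
  obtain ⟨s, hs⟩ := exists_surjective_nat (Fin n →₀ ℕ)
  refine ⟨fun i => g (MvPolynomial.monomial (s i) 1), ?_⟩
  rw [eq_top_iff]
  rintro a -
  obtain ⟨p, rfl⟩ := hg a
  rw [MvPolynomial.as_sum p, map_sum]
  refine Submodule.sum_mem _ fun d _ => ?_
  obtain ⟨i, rfl⟩ := hs d
  have : MvPolynomial.monomial (s i) (MvPolynomial.coeff (s i) p) =
      (MvPolynomial.coeff (s i) p) • MvPolynomial.monomial (s i) (1 : ℝ) := by
    rw [MvPolynomial.smul_monomial, smul_eq_mul, mul_one]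
  rw [this, map_smul]
  exact Submodule.smul_mem _ _ (Submodule.subset_span ⟨i, rfl⟩)

section cap
variable {A : Type} [CommRing A] [Algebra ℝ A]

/-- The cap of the cone of positive functionals. -/
structure InCap (S : Set A) (c : ℕ → ℝ) (b : ℕ → A) (φ : A → ℝ) : Prop where
  add : ∀ x y, φ (x + y) = φ x + φ y
  smul : ∀ (r : ℝ) x, φ (r • x) = r * φ x
  pos : ∀ x, IsInPreordering S x → 0 ≤ φ x
  sum : ∀ n, ∑ i ∈ Finset.range n, c i * φ (b i) ≤ 1

def InCap.toLin {S : Set A} {c : ℕ → ℝ} {b : ℕ → A} {φ : A → ℝ} (h : InCap S c b φ) : A →ₗ[ℝ] ℝ where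
  toFun := φ
  map_add' := h.add
  map_smul' := h.smul

theorem cap_closed (S : Set A) (c : ℕ → ℝ) (b : ℕ → A) : IsClosed {φ | InCap S c b φ} := by
  have : {φ | InCap S c b φ} = (⋂ x, ⋂ y, {φ : A → ℝ | φ (x + y) = φ x + φ y}) ∩
      (⋂ r : ℝ, ⋂ x, {φ : A → ℝ | φ (r • x) = r * φ x}) ∩
      (⋂ x, ⋂ _ : IsInPreordering S x, {φ : A → ℝ | 0 ≤ φ x}) ∩
      (⋂ n, {φ : A → ℝ | ∑ i ∈ Finset.range n, c i * φ (b i) ≤ 1}) := by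
    ext φ
    simp only [Set.mem_ofPred_eq, Set.mem_inter_iff, Set.mem_iInter]
    exact ⟨fun h => ⟨⟨⟨h.add, h.smul⟩, h.pos⟩, h.sum⟩, fun h => ⟨h.1.1.1, h.1.1.2, h.1.2, h.2⟩⟩
  rw [this]
  refine ((IsClosed.inter ?_ ?_).inter ?_).inter ?_
  · exact isClosed_iInter fun x => isClosed_iInter fun y => isClosed_eq (by fun_prop) (by fun_prop)
  · exact isClosed_iInter fun x => isClosed_iInter fun y => isClosed_eq (by fun_prop) (by fun_prop)
  · exact isClosed_iInter fun x => isClosed_iInter fun y => isClosed_le (by fun_prop) (by fun_prop)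
  · exact isClosed_iInter fun x => isClosed_le (by fun_prop) (by fun_prop)

theorem cap_convex (S : Set A) (c : ℕ → ℝ) (b : ℕ → A) : Convex ℝ {φ | InCap S c b φ} := by
  intro φ hφ ψ hψ s t hs ht hst
  refine ⟨?_, ?_, ?_, ?_⟩
  · intro x y; simp [hφ.add, hψ.add]; ring
  · intro x y; simp [hφ.smul, hψ.smul]; ring
  · intro x hx
    have := hφ.pos x hx
    have := hψ.pos x hx
    simp only [Pi.add_apply, Pi.smul_apply, smul_eq_mul]
    positivity
  · intro n
    have h1 := mul_le_mul_of_nonneg_left (hφ.sum n) hs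
    have h2 := mul_le_mul_of_nonneg_left (hψ.sum n) ht
    have : ∑ i ∈ Finset.range n, c i * (s • φ + t • ψ) (b i) =
      s * ∑ i ∈ Finset.range n, c i * φ (b i) + t * ∑ i ∈ Finset.range n, c i * ψ (b i) := by
      rw [Finset.mul_sum, Finset.mul_sum, ← Finset.sum_add_distrib]
      refine Finset.sum_congr rfl fun i _ => ?_
      simp; ring
    rw [this]; linarith

variable {S : Set A} {c : ℕ → ℝ} {e : ℕ → A}

theorem lin_abs_le (L : A →ₗ[ℝ] ℝ) (hL : ∀ x, IsInPreordering S x → 0 ≤ L x) (a : A) :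
    |L a| ≤ L (1 + a ^ 2) := by
  have h1 := hL _ (.sq (1 + a))
  have h2 := hL _ (.sq (1 - a))
  have h3 := hL _ ((IsInPreordering.one S).add (.sq a))
  have e1 : (1 + a) ^ 2 = (1 + a ^ 2) + (2 : ℝ) • a := by rw [Algebra.smul_def, map_ofNat]; ring
  have e2 : (1 - a) ^ 2 = (1 + a ^ 2) - (2 : ℝ) • a := by rw [Algebra.smul_def, map_ofNat]; ring
  rw [e1, map_add, map_smul, smul_eq_mul] at h1
  rw [e2, map_sub, map_smul, smul_eq_mul] at h2
  rw [abs_le]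
  constructor <;> linarith

theorem InCap.le_one (hc : ∀ i, 0 < c i) {φ : A → ℝ} (h : InCap S c (fun i => 1 + e i ^ 2) φ) (i : ℕ) :
    c i * φ (1 + e i ^ 2) ≤ 1 := by
  refine le_trans ?_ (h.sum (i + 1))
  refine Finset.single_le_sum (f := fun i => c i * φ (1 + e i ^ 2)) (fun j _ => ?_) (by simp)
  exact mul_nonneg (hc j).le (h.pos _ ((IsInPreordering.one S).add (.sq _)))

theorem cap_compact (he : Submodule.span ℝ (Set.range e) = ⊤) (hc : ∀ i, 0 < c i) :
    IsCompact {φ | InCap S c (fun i => 1 + e i ^ 2) φ} := by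
  have hb : ∀ a : A, ∃ M : ℝ, ∀ φ, InCap S c (fun i => 1 + e i ^ 2) φ → |φ a| ≤ M := by
    intro a
    have ha : a ∈ Submodule.span ℝ (Set.range e) := by rw [he]; trivial
    induction ha using Submodule.span_induction with
    | mem x hx =>
      obtain ⟨i, rfl⟩ := hx
      refine ⟨1 / c i, fun φ hφ => ?_⟩
      refine (lin_abs_le hφ.toLin hφ.pos (e i)).trans ?_
      rw [le_div_iff₀' (hc i)]
      exact hφ.le_one hc i
    | zero => exact ⟨0, fun φ hφ => by
        have : hφ.toLin 0 = 0 := map_zero _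
        exact (abs_eq_zero.2 this).le⟩
    | add x y _ _ hx hy =>
      obtain ⟨M, hM⟩ := hx
      obtain ⟨N, hN⟩ := hy
      refine ⟨M + N, fun φ hφ => ?_⟩
      rw [hφ.add]
      exact (abs_add_le _ _).trans (add_le_add (hM φ hφ) (hN φ hφ))
    | smul r x _ hx =>
      obtain ⟨M, hM⟩ := hx
      refine ⟨|r| * M, fun φ hφ => ?_⟩
      rw [hφ.smul, abs_mul]
      exact mul_le_mul_of_nonneg_left (hM φ hφ) (abs_nonneg _)
  choose M hM using hb
  refine IsCompact.of_isClosed_subset (isCompact_univ_pi fun a => isCompact_Icc (a := -M a) (b := M a))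
    (cap_closed _ _ _) ?_
  intro φ hφ a _
  exact abs_le.1 (hM a φ hφ)

/-- An extreme point of the cap has proportional components. -/
theorem cap_extreme (he : Submodule.span ℝ (Set.range e) = ⊤) (hc : ∀ i, 0 < c i) {φ : A → ℝ}
    (hφ : φ ∈ Set.extremePoints ℝ {φ | InCap S c (fun i => 1 + e i ^ 2) φ})
    (L1 L2 : A →ₗ[ℝ] ℝ) (h1 : ∀ x, IsInPreordering S x → 0 ≤ L1 x)
    (h2 : ∀ x, IsInPreordering S x → 0 ≤ L2 x) (hsum : ∀ x, φ x = L1 x + L2 x) :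
    ∃ s : ℝ, ∀ x, L1 x = s * φ x := by
  obtain ⟨hφQ, hext⟩ := hφ
  have hbT : ∀ i, IsInPreordering S (1 + e i ^ 2) := fun i => (IsInPreordering.one S).add (.sq _)
  have hs0 : Summable fun i => c i * φ (1 + e i ^ 2) :=
    summable_of_sum_range_le (c := 1) (fun i => mul_nonneg (hc i).le (hφQ.pos _ (hbT i))) hφQ.sum
  have n1 : ∀ i, 0 ≤ c i * L1 (1 + e i ^ 2) := fun i => mul_nonneg (hc i).le (h1 _ (hbT i))
  have n2 : ∀ i, 0 ≤ c i * L2 (1 + e i ^ 2) := fun i => mul_nonneg (hc i).le (h2 _ (hbT i))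
  have hadd : ∀ i, c i * φ (1 + e i ^ 2) = c i * L1 (1 + e i ^ 2) + c i * L2 (1 + e i ^ 2) := by
    intro i; rw [hsum]; ring
  have hs1 : Summable fun i => c i * L1 (1 + e i ^ 2) :=
    Summable.of_nonneg_of_le n1 (fun i => by rw [hadd]; linarith [n2 i]) hs0
  have hs2 : Summable fun i => c i * L2 (1 + e i ^ 2) :=
    Summable.of_nonneg_of_le n2 (fun i => by rw [hadd]; linarith [n1 i]) hs0
  have hzero : ∀ L : A →ₗ[ℝ] ℝ, (∀ x, IsInPreordering S x → 0 ≤ L x) →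
      Summable (fun i => c i * L (1 + e i ^ 2)) → ∑' i, c i * L (1 + e i ^ 2) = 0 → ∀ x, L x = 0 := by
    intro L hL hs h0 x
    have hi : ∀ i, c i * L (1 + e i ^ 2) = 0 := by
      have hh := hs.hasSum
      rw [h0, hasSum_zero_iff_of_nonneg (fun i => mul_nonneg (hc i).le (hL _ (hbT i)))] at hh
      exact fun i => congrFun hh i
    have hLz : L = 0 := by
      refine LinearMap.ext_on_range (v := e) (by exact he) fun i => ?_
      have h3 := lin_abs_le L hL (e i)
      rw [(mul_eq_zero.1 (hi i)).resolve_left (hc i).ne'] at h3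
      simpa using h3
    rw [hLz]; rfl
  set s := ∑' i, c i * L1 (1 + e i ^ 2) with hs
  set r := ∑' i, c i * L2 (1 + e i ^ 2) with hr
  have hs_nn : 0 ≤ s := tsum_nonneg n1
  have hr_nn : 0 ≤ r := tsum_nonneg n2
  have hsr : s + r ≤ 1 := by
    rw [hs, hr, ← hs1.tsum_add hs2, ← tsum_congr hadd]
    exact Real.tsum_le_of_sum_range_le (fun i => mul_nonneg (hc i).le (hφQ.pos _ (hbT i))) hφQ.sum
  rcases hs_nn.eq_or_lt with hs' | hs'
  · exact ⟨0, fun x => by rw [hzero L1 h1 hs1 hs'.symm x, zero_mul]⟩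
  rcases hr_nn.eq_or_lt with hr' | hr'
  · exact ⟨1, fun x => by rw [hsum, hzero L2 h2 hs2 hr'.symm x, add_zero, one_mul]⟩
  set s' := s + (1 - s - r) / 2 with hs'def
  set r' := r + (1 - s - r) / 2 with hr'def
  have hs'0 : 0 < s' := by linarith
  have hr'0 : 0 < r' := by linarith
  have mem : ∀ (L : A →ₗ[ℝ] ℝ) (w : ℝ), 0 < w → (∀ x, IsInPreordering S x → 0 ≤ L x) →
      Summable (fun i => c i * L (1 + e i ^ 2)) → ∑' i, c i * L (1 + e i ^ 2) ≤ w →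
      InCap S c (fun i => 1 + e i ^ 2) (fun x => w⁻¹ * L x) := by
    intro L w hw hL hsL hle
    refine ⟨fun x y => by rw [map_add]; ring, fun t x => by rw [map_smul, smul_eq_mul]; ring,
      fun x hx => mul_nonneg (inv_nonneg.2 hw.le) (hL x hx), fun n => ?_⟩
    have h3 := (hsL.sum_le_tsum (Finset.range n) (fun i _ => mul_nonneg (hc i).le (hL _ (hbT i)))).trans hle
    have h4 : ∑ i ∈ Finset.range n, c i * (w⁻¹ * L (1 + e i ^ 2)) =
        w⁻¹ * ∑ i ∈ Finset.range n, c i * L (1 + e i ^ 2) := by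
      rw [Finset.mul_sum]; exact Finset.sum_congr rfl fun i _ => by ring
    rw [h4, inv_mul_le_iff₀ hw]
    linarith
  have key := hext (mem L1 s' hs'0 h1 hs1 (by linarith)) (mem L2 r' hr'0 h2 hs2 (by linarith))
    ⟨s', r', hs'0, hr'0, by linarith, by
      ext x
      simp only [Pi.add_apply, Pi.smul_apply, smul_eq_mul]
      rw [mul_inv_cancel_left₀ hs'0.ne', mul_inv_cancel_left₀ hr'0.ne', hsum]⟩
  refine ⟨s', fun x => ?_⟩
  rw [← key, mul_inv_cancel_left₀ hs'0.ne']

end cap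

theorem nonneg_of_fibres
    {A : Type} [CommRing A] [Algebra ℝ A] (hfg : Algebra.FiniteType ℝ A)
    {k m : ℕ} (f : Fin k → A) (h : Fin m → A)
    (hbd : ∃ C : ℝ, ∀ χ ∈ KSet (Set.range f), ∀ j : Fin m, |χ (h j)| ≤ C)
    (hfib : ∀ lam : Fin m → ℝ,
      (∃ χ ∈ KSet (Set.range f), ∀ j : Fin m, χ (h j) = lam j) →
      ∃ (B : MPAlgebra)
        (ρ : B.carrier →ₐ[ℝ]
          (A ⧸ Ideal.span (Set.range fun j : Fin m => h j - algebraMap ℝ A (lam j)))),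
        Function.Surjective ρ)
    (L : A →ₗ[ℝ] ℝ) (hL : ∀ a : A, IsInPreordering (Set.range f) a → 0 ≤ L a)
    (p : A) (hp : ∀ χ : A →ₐ[ℝ] ℝ, 0 ≤ χ p) : 0 ≤ L p := by
  obtain ⟨C0, hC0⟩ := hbd
  obtain ⟨C, hC, hCC⟩ : ∃ C : ℝ, 0 < C ∧ C0 < C := ⟨|C0| + 1, by positivity, by linarith [le_abs_self C0]⟩
  obtain ⟨e, he⟩ := exists_countable_span hfg
  let c : ℕ → ℝ := fun i => (1 / 2) ^ (i + 1) / (1 + L (1 + e i ^ 2))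
  have hLb : ∀ i, 0 ≤ L (1 + e i ^ 2) := fun i => hL _ ((IsInPreordering.one _).add (.sq _))
  have hc : ∀ i, 0 < c i := fun i => by
    have := hLb i
    simp only [c]; positivity
  have hLQ : InCap (Set.range f) c (fun i => 1 + e i ^ 2) L := by
    refine ⟨map_add L, fun r x => by rw [map_smul, smul_eq_mul], hL, fun n => ?_⟩
    have h1 : ∀ n : ℕ, ∑ i ∈ Finset.range n, (1 / 2 : ℝ) ^ (i + 1) = 1 - (1 / 2) ^ n := by
      intro n
      induction n with
      | zero => simp
      | succ n ih => rw [Finset.sum_range_succ, ih]; ring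
    calc ∑ i ∈ Finset.range n, c i * L (1 + e i ^ 2) ≤ ∑ i ∈ Finset.range n, (1 / 2 : ℝ) ^ (i + 1) := by
          refine Finset.sum_le_sum fun i _ => ?_
          have := hLb i
          simp only [c]
          rw [div_mul_eq_mul_div, div_le_iff₀ (by positivity)]
          have : (0 : ℝ) < (1 / 2) ^ (i + 1) := by positivity
          nlinarith
      _ = 1 - (1 / 2) ^ n := h1 n
      _ ≤ 1 := by
          have : (0 : ℝ) < (1 / 2) ^ n := by positivity
          linarith
  have hcert := fun j => exists_cert hfg (Set.finite_range f) (h j) (c := C ^ 2) (by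
    intro χ hχ
    have := hC0 χ hχ j
    rw [← sq_abs]
    have := abs_nonneg (χ (h j))
    nlinarith)
  have hextr : ∀ φ ∈ Set.extremePoints ℝ {φ | InCap (Set.range f) c (fun i => 1 + e i ^ 2) φ}, 0 ≤ φ p := by
    intro φ hφ
    have hφQ : InCap (Set.range f) c (fun i => 1 + e i ^ 2) φ := hφ.1
    let E := hφQ.toLin
    have hEφ : ∀ x, E x = φ x := fun _ => rfl
    have hE : ∀ x, IsInPreordering (Set.range f) x → 0 ≤ E x := hφQ.pos
    have hlam : ∀ j, ∃ l : ℝ, ∀ a, E (h j * a) = l * E a := by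
      intro j
      obtain ⟨s, t, hs, ht, hst⟩ := hcert j
      have hlin := fun a ha => lin_bound E hC (h j) hE (fun a ha =>
        mul_bound E hE (by positivity) (h j) s t hs ht hst ha) (a := a) ha
      obtain ⟨w, hw⟩ := cap_extreme he hc hφ
        (E.comp (LinearMap.mulLeft ℝ ((2 * C)⁻¹ • (C • 1 + h j))))
        (E.comp (LinearMap.mulLeft ℝ ((2 * C)⁻¹ • (C • 1 - h j))))
        (fun x hx => by
          simp only [LinearMap.comp_apply, LinearMap.mulLeft_apply]
          rw [smul_mul_assoc, map_smul, smul_eq_mul]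
          exact mul_nonneg (by positivity) (hlin x hx).1)
        (fun x hx => by
          simp only [LinearMap.comp_apply, LinearMap.mulLeft_apply]
          rw [smul_mul_assoc, map_smul, smul_eq_mul]
          exact mul_nonneg (by positivity) (hlin x hx).2)
        (fun x => by
          simp only [LinearMap.comp_apply, LinearMap.mulLeft_apply]
          rw [smul_mul_assoc, map_smul, smul_mul_assoc, map_smul, ← smul_add, ← map_add, ← add_mul]
          have : (C • 1 + h j + (C • 1 - h j)) * x = (2 * C) • x := by
            simp only [Algebra.smul_def, map_mul, map_ofNat]; ring
          rw [this, map_smul, smul_eq_mul, smul_eq_mul, inv_mul_cancel_left₀ (by positivity), hEφ])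
      refine ⟨2 * C * w - C, fun a => ?_⟩
      have := hw a
      simp only [LinearMap.comp_apply, LinearMap.mulLeft_apply] at this
      rw [smul_mul_assoc, map_smul, smul_eq_mul, inv_mul_eq_iff_eq_mul₀ (by positivity), add_mul, map_add,
        smul_mul_assoc, one_mul, map_smul, smul_eq_mul, ← hEφ] at this
      linarith
    choose lam hlam using hlam
    exact fibre_nonneg hfg f h hfib E hE lam hlam p hp
  have hKM := closure_convexHull_extremePoints (cap_compact (S := Set.range f) he hc) (cap_convex _ _ _)
  have hmem : (L : A → ℝ) ∈ {φ | InCap (Set.range f) c (fun i => 1 + e i ^ 2) φ} := hLQ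
  rw [← hKM] at hmem
  have hsub : closure (convexHull ℝ (Set.extremePoints ℝ {φ | InCap (Set.range f) c (fun i => 1 + e i ^ 2) φ}))
      ⊆ {φ : A → ℝ | 0 ≤ φ p} := by
    refine closure_minimal (convexHull_min hextr ?_) (isClosed_le (by fun_prop) (by fun_prop))
    intro φ hφ ψ hψ s t hs ht hst
    simp only [Set.mem_ofPred_eq, Pi.add_apply, Pi.smul_apply, smul_eq_mul] at *
    positivity
  exact hsub hmem

end

section

open Filter Topology MeasureTheory

section hav
variable {A : Type} [CommRing A] [Algebra ℝ A]

theorem char_continuous (a : A) : Continuous (fun χ : A →ₐ[ℝ] ℝ => χ a) :=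
  (continuous_apply a).comp continuous_induced_dom

instance charBorel : BorelSpace (A →ₐ[ℝ] ℝ) := ⟨rfl⟩

theorem char_closedEmbedding {n : ℕ} (g : MvPolynomial (Fin n) ℝ →ₐ[ℝ] A)
    (hg : Function.Surjective g) :
    IsClosedEmbedding (fun (χ : A →ₐ[ℝ] ℝ) (k : Fin n) => χ (g (MvPolynomial.X k))) := by
  have hev : ∀ (χ : A →ₐ[ℝ] ℝ) (p : MvPolynomial (Fin n) ℝ),
      χ (g p) = MvPolynomial.aeval (fun k => χ (g (MvPolynomial.X k))) p := by
    intro χ p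
    have : χ.comp g = MvPolynomial.aeval (fun k => χ (g (MvPolynomial.X k))) := by
      ext k; simp
    rw [← this]; rfl
  have hcp : ∀ p : MvPolynomial (Fin n) ℝ, Continuous fun x : Fin n → ℝ => MvPolynomial.aeval x p :=
    fun p => by
      simpa [MvPolynomial.aeval_def] using MvPolynomial.continuous_eval p
  refine ⟨⟨⟨?_⟩, ?_⟩, ?_⟩
  · refine le_antisymm ?_ ?_
    · rw [← continuous_iff_le_induced]
      exact continuous_pi fun k => char_continuous _
    · let _ : TopologicalSpace (A →ₐ[ℝ] ℝ) := TopologicalSpace.induced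
        (fun (χ : A →ₐ[ℝ] ℝ) (k : Fin n) => χ (g (MvPolynomial.X k))) Pi.topologicalSpace
      change _ ≤ TopologicalSpace.induced (fun (χ : A →ₐ[ℝ] ℝ) (a : A) => χ a) Pi.topologicalSpace
      rw [← continuous_iff_le_induced]
      refine continuous_pi fun a => ?_
      obtain ⟨p, rfl⟩ := hg a
      rw [show (fun χ : A →ₐ[ℝ] ℝ => χ (g p)) = fun χ => MvPolynomial.aeval
        (fun k => χ (g (MvPolynomial.X k))) p from funext fun χ => hev χ p]
      exact (hcp p).comp continuous_induced_dom
  · intro χ χ' h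
    ext a
    obtain ⟨p, rfl⟩ := hg a
    rw [hev, hev]
    exact congrArg (fun x => MvPolynomial.aeval x p) h
  · have : Set.range (fun (χ : A →ₐ[ℝ] ℝ) (k : Fin n) => χ (g (MvPolynomial.X k))) =
        ⋂ p ∈ RingHom.ker g.toRingHom, {x : Fin n → ℝ | MvPolynomial.aeval x p = (0 : ℝ)} := by
      ext x
      simp only [Set.mem_range, Set.mem_iInter, Set.mem_ofPred_eq]
      constructor
      · rintro ⟨χ, rfl⟩ p hp
        rw [← hev]
        have : g p = 0 := hp
        rw [this, map_zero]
      · intro h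
        have hk : RingHom.ker g.toRingHom ≤
            RingHom.ker (MvPolynomial.aeval (R := ℝ) x : _ →ₐ[ℝ] ℝ).toRingHom :=
          fun p hp => h p hp
        refine ⟨AlgHom.liftOfSurjective g hg (MvPolynomial.aeval x) hk, ?_⟩
        ext k
        exact (AlgHom.liftOfSurjective_apply g hg _ hk _).trans (MvPolynomial.aeval_X _ _)
    rw [this]
    exact isClosed_biInter fun p _ => isClosed_eq (hcp p) continuous_const

/-- A proper element. -/
theorem exists_proper (hfg : Algebra.FiniteType ℝ A) :
    T2Space (A →ₐ[ℝ] ℝ) ∧ LocallyCompactSpace (A →ₐ[ℝ] ℝ) ∧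
    ∃ N : A, (∀ χ : A →ₐ[ℝ] ℝ, 1 ≤ χ N) ∧ ∀ r : ℝ, IsCompact {χ : A →ₐ[ℝ] ℝ | χ N ≤ r} := by
  obtain ⟨n, g, hg⟩ := Algebra.FiniteType.iff_quotient_mvPolynomial''.1 hfg
  have hce := char_closedEmbedding g hg
  refine ⟨hce.isEmbedding.t2Space, hce.locallyCompactSpace,
    1 + ∑ k, g (MvPolynomial.X k) ^ 2, ?_, ?_⟩
  · intro χ
    simp only [map_add, map_one, map_sum, map_pow]
    have : 0 ≤ ∑ k, χ (g (MvPolynomial.X k)) ^ 2 := Finset.sum_nonneg fun k _ => sq_nonneg _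
    linarith
  · intro r
    have hK := hce.isCompact_preimage (isCompact_closedBall (0 : Fin n → ℝ) (|r| + 1))
    refine hK.of_isClosed_subset (isClosed_le (char_continuous _) continuous_const) ?_
    intro χ hχ
    simp only [Set.mem_ofPred_eq, map_add, map_one, map_sum, map_pow] at hχ
    simp only [Set.mem_preimage, mem_closedBall_zero_iff]
    rw [pi_norm_le_iff_of_nonneg (by positivity)]
    intro k
    have h1 : χ (g (MvPolynomial.X k)) ^ 2 ≤ ∑ k, χ (g (MvPolynomial.X k)) ^ 2 :=
      Finset.single_le_sum (f := fun k => χ (g (MvPolynomial.X k)) ^ 2) (fun k _ => sq_nonneg _)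
        (Finset.mem_univ k)
    rw [Real.norm_eq_abs]
    have h2 := le_abs_self r
    have h3 := sq_abs (χ (g (MvPolynomial.X k)))
    nlinarith [abs_nonneg (χ (g (MvPolynomial.X k))), abs_nonneg r]

/-- Continuous functions dominated by elements of `A`. -/
def domSub (A : Type) [CommRing A] [Algebra ℝ A] : Submodule ℝ C((A →ₐ[ℝ] ℝ), ℝ) where
  carrier := {φ | ∃ a : A, ∀ χ, |φ χ| ≤ χ a}
  add_mem' := by
    rintro φ ψ ⟨a, ha⟩ ⟨b, hb⟩
    refine ⟨a + b, fun χ => ?_⟩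
    rw [map_add]
    exact (abs_add_le _ _).trans (add_le_add (ha χ) (hb χ))
  zero_mem' := ⟨0, fun χ => by simp⟩
  smul_mem' := by
    rintro r φ ⟨a, ha⟩
    refine ⟨|r| • a, fun χ => ?_⟩
    rw [map_smul, smul_eq_mul, ContinuousMap.smul_apply, smul_eq_mul, abs_mul]
    exact mul_le_mul_of_nonneg_left (ha χ) (abs_nonneg _)

def evC (a : A) : C((A →ₐ[ℝ] ℝ), ℝ) := ⟨fun χ => χ a, char_continuous a⟩

theorem evC_mem (a : A) : evC a ∈ domSub A := by
  refine ⟨1 + a ^ 2, fun χ => ?_⟩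
  rw [map_add, map_one, map_pow]
  change |χ a| ≤ _
  rw [← sq_abs]
  nlinarith [sq_nonneg (|χ a| - 1)]

def evLin (A : Type) [CommRing A] [Algebra ℝ A] : A →ₗ[ℝ] domSub A where
  toFun a := ⟨evC a, evC_mem a⟩
  map_add' a b := by ext χ; exact map_add χ a b
  map_smul' r a := by ext χ; exact map_smul χ r a

theorem evLin_apply (a : A) (χ : A →ₐ[ℝ] ℝ) : (evLin A a).1 χ = χ a := rfl

/-- Extension of `L` to the dominated continuous functions. -/
theorem exists_ext (L : A →ₗ[ℝ] ℝ) (hL : ∀ p : A, (∀ χ : A →ₐ[ℝ] ℝ, 0 ≤ χ p) → 0 ≤ L p) :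
    ∃ G : domSub A →ₗ[ℝ] ℝ, (∀ a, G (evLin A a) = L a) ∧
      ∀ φ : domSub A, (∀ χ, 0 ≤ φ.1 χ) → 0 ≤ G φ := by
  have hker : LinearMap.ker (evLin A) ≤ LinearMap.ker L := by
    intro a ha
    have h0 : ∀ χ : A →ₐ[ℝ] ℝ, χ a = 0 := by
      intro χ
      rw [← evLin_apply, LinearMap.mem_ker.1 ha]
      rfl
    have h1 := hL a (fun χ => (h0 χ).ge)
    have h2 := hL (-a) (fun χ => by rw [map_neg, h0 χ, neg_zero])
    rw [map_neg] at h2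
    exact LinearMap.mem_ker.2 (by linarith)
  choose l hl using fun φ : LinearMap.range (evLin A) => φ.2
  have hwd : ∀ a b, evLin A a = evLin A b → L a = L b := by
    intro a b hab
    have : a - b ∈ LinearMap.ker L := hker (LinearMap.mem_ker.2 (by rw [map_sub, hab, sub_self]))
    rw [LinearMap.mem_ker, map_sub, sub_eq_zero] at this
    exact this
  let F : LinearMap.range (evLin A) →ₗ[ℝ] ℝ :=
    { toFun := fun φ => L (l φ)
      map_add' := fun φ ψ => by
        rw [← map_add]; exact hwd _ _ (by rw [hl, map_add, hl, hl]; rfl)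
      map_smul' := fun r φ => by
        rw [RingHom.id_apply, ← map_smul]; exact hwd _ _ (by rw [hl, map_smul, hl]; rfl) }
  let P : PointedCone ℝ (domSub A) :=
    { carrier := {φ | ∀ χ, 0 ≤ φ.1 χ}
      add_mem' := fun {φ ψ} h1 h2 χ => add_nonneg (h1 χ) (h2 χ)
      zero_mem' := fun χ => le_rfl
      smul_mem' := fun r φ h1 χ => mul_nonneg r.2 (h1 χ) }
  obtain ⟨G, hG1, hG2⟩ := riesz_extension P ⟨LinearMap.range (evLin A), F⟩
    (by
      rintro x hx
      refine hL _ fun χ => ?_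
      have := hx χ
      rw [← hl x, evLin_apply] at this
      exact this)
    (by
      intro φ
      obtain ⟨a, ha⟩ := φ.2
      refine ⟨⟨evLin A a, ⟨a, rfl⟩⟩, fun χ => ?_⟩
      change 0 ≤ χ a + φ.1 χ
      have := (abs_le.1 (ha χ)).1
      linarith)
  refine ⟨G, fun a => ?_, hG2⟩
  rw [hG1 ⟨evLin A a, ⟨a, rfl⟩⟩]
  exact hwd _ _ (hl _)

end hav

end

section

open Filter Topology MeasureTheory

section hav2
open scoped CompactlySupported
variable {A : Type} [CommRing A] [Algebra ℝ A]

theorem cc_mem (φ : C_c((A →ₐ[ℝ] ℝ), ℝ)) : φ.toContinuousMap ∈ domSub A := by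
  obtain ⟨C, hC⟩ := φ.hasCompactSupport.exists_bound_of_continuous φ.continuous
  refine ⟨algebraMap ℝ A C, fun χ => ?_⟩
  rw [AlgHom.commutes]
  exact hC χ

theorem exists_cc_measure [T2Space (A →ₐ[ℝ] ℝ)] [LocallyCompactSpace (A →ₐ[ℝ] ℝ)]
    (G : domSub A →ₗ[ℝ] ℝ) (hG : ∀ φ : domSub A, (∀ χ, 0 ≤ φ.1 χ) → 0 ≤ G φ) :
    ∃ μ : Measure (A →ₐ[ℝ] ℝ), IsFiniteMeasureOnCompacts μ ∧ ∀ φ : C_c((A →ₐ[ℝ] ℝ), ℝ),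
      ∫ χ, φ χ ∂μ = G ⟨φ.toContinuousMap, cc_mem φ⟩ := by
  let F : C_c((A →ₐ[ℝ] ℝ), ℝ) →ₗ[ℝ] ℝ :=
    { toFun := fun φ => G ⟨φ.toContinuousMap, cc_mem φ⟩
      map_add' := fun φ ψ => by rw [← map_add]; rfl
      map_smul' := fun r φ => by rw [RingHom.id_apply, ← map_smul]; rfl }
  let Λ : C_c((A →ₐ[ℝ] ℝ), ℝ) →ₚ[ℝ] ℝ :=
    PositiveLinearMap.mk₀ F (fun φ hφ => hG _ fun χ => hφ χ)
  refine ⟨RealRMK.rieszMeasure Λ, inferInstance, fun φ => ?_⟩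
  exact RealRMK.integral_rieszMeasure Λ φ

/-- Cutoff function. -/
noncomputable def cut (N : A) (n : ℕ) (χ : A →ₐ[ℝ] ℝ) : ℝ :=
  max 0 (min 1 (2 - χ N / (n + 1)))

theorem cut_cont (N : A) (n : ℕ) : Continuous (cut N n) := by
  have := char_continuous N
  exact continuous_const.max (continuous_const.min (continuous_const.sub (this.div_const _)))

theorem cut_nonneg (N : A) (n : ℕ) (χ : A →ₐ[ℝ] ℝ) : 0 ≤ cut N n χ := le_max_left _ _

theorem cut_le_one (N : A) (n : ℕ) (χ : A →ₐ[ℝ] ℝ) : cut N n χ ≤ 1 :=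
  max_le zero_le_one (min_le_left _ _)

theorem one_sub_cut_le (N : A) (n : ℕ) (χ : A →ₐ[ℝ] ℝ) (hN : 1 ≤ χ N) :
    1 - cut N n χ ≤ χ N / (n + 1) := by
  have h0 : 0 ≤ χ N / (n + 1) := by positivity
  unfold cut
  rcases le_total 1 (2 - χ N / (n + 1)) with h | h
  · rw [min_eq_left h]; simp; exact h0
  · rw [min_eq_right h]
    have := le_max_right 0 (2 - χ N / (n + 1))
    linarith

theorem cut_tendsto (N : A) (χ : A →ₐ[ℝ] ℝ) (hN : 1 ≤ χ N) :
    Tendsto (fun n => cut N n χ) atTop (𝓝 1) := by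
  have h1 : Tendsto (fun n : ℕ => 1 - χ N / ((n : ℝ) + 1)) atTop (𝓝 (1 - 0)) := by
    refine tendsto_const_nhds.sub ?_
    have := (tendsto_one_div_add_atTop_nhds_zero_nat (𝕜 := ℝ)).const_mul (χ N)
    simpa [div_eq_mul_inv] using this
  rw [sub_zero] at h1
  refine tendsto_of_tendsto_of_tendsto_of_le_of_le h1 tendsto_const_nhds (fun n => ?_)
    (fun n => cut_le_one N n χ)
  have := one_sub_cut_le N n χ hN
  change 1 - χ N / ((n : ℝ) + 1) ≤ cut N n χ
  linarith

/-- Haviland theorem for finitely generated algebras. -/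
theorem haviland (hfg : Algebra.FiniteType ℝ A) (L : A →ₗ[ℝ] ℝ)
    (hL : ∀ p : A, (∀ χ : A →ₐ[ℝ] ℝ, 0 ≤ χ p) → 0 ≤ L p) : IsMomentFunctional L := by
  obtain ⟨hT2, hLC, N, hN1, hNc⟩ := exists_proper hfg
  obtain ⟨G, hGL, hGpos⟩ := exists_ext L hL
  obtain ⟨μ, hμc, hμ⟩ := exists_cc_measure G hGpos
  -- nonnegative elements
  have key : ∀ a : A, (∀ χ : A →ₐ[ℝ] ℝ, 0 ≤ χ a) →
      Integrable (fun χ : A →ₐ[ℝ] ℝ => χ a) μ ∧ L a = ∫ χ : A →ₐ[ℝ] ℝ, χ a ∂μ := by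
    intro a ha
    have hcs : ∀ n : ℕ, HasCompactSupport (fun χ : A →ₐ[ℝ] ℝ => cut N n χ * χ a) := by
      intro n
      refine HasCompactSupport.intro (hNc (2 * (n + 1))) fun χ hχ => ?_
      have h1 : 2 * ((n : ℝ) + 1) < χ N := not_le.1 hχ
      have h2 : 2 - χ N / ((n : ℝ) + 1) ≤ 0 := by
        rw [sub_nonpos, le_div_iff₀ (by positivity)]; exact h1.le
      have h3 : cut N n χ = 0 := by
        unfold cut
        exact max_eq_left ((min_le_right _ _).trans h2)
      rw [h3, zero_mul]
    have hct : ∀ n : ℕ, Continuous (fun χ : A →ₐ[ℝ] ℝ => cut N n χ * χ a) :=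
      fun n => (cut_cont N n).mul (char_continuous a)
    let φ : ℕ → C_c((A →ₐ[ℝ] ℝ), ℝ) := fun n => ⟨⟨_, hct n⟩, hcs n⟩
    have hintg : ∀ n, Integrable (fun χ : A →ₐ[ℝ] ℝ => cut N n χ * χ a) μ :=
      fun n => (hct n).integrable_of_hasCompactSupport (hcs n)
    have hval : ∀ n, ∫ χ, cut N n χ * χ a ∂μ = G ⟨(φ n).toContinuousMap, cc_mem (φ n)⟩ :=
      fun n => hμ (φ n)
    have hle : ∀ n, ∫ χ, cut N n χ * χ a ∂μ ≤ L a := by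
      intro n
      rw [hval, ← hGL a, ← sub_nonneg, ← map_sub]
      refine hGpos _ fun χ => ?_
      change 0 ≤ χ a - cut N n χ * χ a
      nlinarith [ha χ, cut_le_one N n χ]
    have hge : ∀ n : ℕ, L a - L (N * a) / ((n : ℝ) + 1) ≤ ∫ χ, cut N n χ * χ a ∂μ := by
      intro n
      have e : L a - L (N * a) / ((n : ℝ) + 1) = L (a - ((n : ℝ) + 1)⁻¹ • (N * a)) := by
        rw [map_sub, map_smul, smul_eq_mul]; ring
      rw [hval, e, ← hGL, ← sub_nonneg, ← map_sub]
      refine hGpos _ fun χ => ?_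
      change 0 ≤ cut N n χ * χ a - χ (a - ((n : ℝ) + 1)⁻¹ • (N * a))
      rw [map_sub, map_smul, map_mul, smul_eq_mul]
      have h1 := one_sub_cut_le N n χ (hN1 χ)
      have h2 := mul_le_mul_of_nonneg_right h1 (ha χ)
      have h3 : χ N / ((n : ℝ) + 1) * χ a = ((n : ℝ) + 1)⁻¹ * (χ N * χ a) := by ring
      linarith
    have hlim : Tendsto (fun n => ∫ χ, cut N n χ * χ a ∂μ) atTop (𝓝 (L a)) := by
      have h1 : Tendsto (fun n : ℕ => L a - L (N * a) / ((n : ℝ) + 1)) atTop (𝓝 (L a - 0)) := by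
        refine tendsto_const_nhds.sub ?_
        have := (tendsto_one_div_add_atTop_nhds_zero_nat (𝕜 := ℝ)).const_mul (L (N * a))
        simpa [div_eq_mul_inv] using this
      rw [sub_zero] at h1
      exact tendsto_of_tendsto_of_tendsto_of_le_of_le h1 tendsto_const_nhds hge hle
    have hpt : ∀ χ : A →ₐ[ℝ] ℝ, Tendsto (fun n => cut N n χ * χ a) atTop (𝓝 (χ a)) := by
      intro χ
      simpa using (cut_tendsto N χ (hN1 χ)).mul_const (χ a)
    have hmeas : AEStronglyMeasurable (fun χ : A →ₐ[ℝ] ℝ => χ a) μ :=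
      aestronglyMeasurable_of_tendsto_ae atTop (fun n => (hintg n).aestronglyMeasurable)
        (Eventually.of_forall hpt)
    have hfin : Integrable (fun χ : A →ₐ[ℝ] ℝ => χ a) μ := by
      refine ⟨hmeas, ?_⟩
      rw [hasFiniteIntegral_iff_ofReal (Eventually.of_forall ha)]
      have e1 : ∀ χ : A →ₐ[ℝ] ℝ, ENNReal.ofReal (χ a) =
          liminf (fun n => ENNReal.ofReal (cut N n χ * χ a)) atTop := by
        intro χ
        exact ((ENNReal.continuous_ofReal.tendsto _).comp (hpt χ)).liminf_eq.symm
      calc ∫⁻ χ : A →ₐ[ℝ] ℝ, ENNReal.ofReal (χ a) ∂μ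
          = ∫⁻ χ : A →ₐ[ℝ] ℝ, liminf (fun n => ENNReal.ofReal (cut N n χ * χ a)) atTop ∂μ :=
            lintegral_congr e1
        _ ≤ liminf (fun n => ∫⁻ χ, ENNReal.ofReal (cut N n χ * χ a) ∂μ) atTop :=
            lintegral_liminf_le fun n => (hct n).measurable.ennreal_ofReal
        _ = liminf (fun n => ENNReal.ofReal (∫ χ, cut N n χ * χ a ∂μ)) atTop := by
            congr 1
            funext n
            exact (ofReal_integral_eq_lintegral_ofReal (hintg n)
              (Eventually.of_forall fun χ => mul_nonneg (cut_nonneg N n χ) (ha χ))).symm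
        _ = ENNReal.ofReal (L a) :=
            ((ENNReal.continuous_ofReal.tendsto _).comp hlim).liminf_eq
        _ < ⊤ := ENNReal.ofReal_lt_top
    refine ⟨hfin, ?_⟩
    refine tendsto_nhds_unique hlim ?_
    refine tendsto_integral_of_dominated_convergence (fun χ => χ a)
      (fun n => (hintg n).aestronglyMeasurable) hfin (fun n => Eventually.of_forall fun χ => ?_)
      (Eventually.of_forall hpt)
    rw [Real.norm_eq_abs, abs_of_nonneg (mul_nonneg (cut_nonneg N n χ) (ha χ))]
    nlinarith [ha χ, cut_le_one N n χ]
  refine ⟨μ, fun a => ?_⟩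
  obtain ⟨i1, l1⟩ := key ((a + 1) ^ 2) (fun χ => by rw [map_pow]; positivity)
  obtain ⟨i2, l2⟩ := key ((a - 1) ^ 2) (fun χ => by rw [map_pow]; positivity)
  have e : ∀ χ : A →ₐ[ℝ] ℝ, χ a = (1 / 4) * (χ ((a + 1) ^ 2) - χ ((a - 1) ^ 2)) := by
    intro χ
    simp only [map_pow, map_add, map_sub, map_one]
    ring
  have e' : a = (1 / 4 : ℝ) • ((a + 1) ^ 2 - (a - 1) ^ 2) := by
    have : (a + 1) ^ 2 - (a - 1) ^ 2 = (4 : ℝ) • a := by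
      rw [Algebra.smul_def, map_ofNat]; ring
    rw [this, smul_smul]; norm_num
  have hf : (fun χ : A →ₐ[ℝ] ℝ => χ a) =
      fun χ => (1 / 4) * (χ ((a + 1) ^ 2) - χ ((a - 1) ^ 2)) := funext e
  refine ⟨?_, ?_⟩
  · rw [hf]; exact (i1.sub i2).const_mul _
  · rw [hf, integral_const_mul, integral_sub i1 i2, ← l1, ← l2, ← map_sub, ← smul_eq_mul,
      ← map_smul, ← e']

end hav2

end

/-- **Corollary 2.6 of the fibre theorem.**  Let `A` be a finitely generated
commutative real unital algebra, `T` the preordering generated by `f₁, …, f_k`,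
and `h₁, …, h_m ∈ A` bounded on `K(T)`.  If for every `λ ∈ h(K(T))` there are a
finitely generated real unital algebra `B_λ` in which squares have the moment
property and a surjective algebra homomorphism `B_λ → A/I_λ` onto the quotient
by the fibre ideal `I_λ`, then every `T`-positive linear functional on `A` is a
moment functional. -/
theorem mp_of_fibre_quotient_surjection
    {A : Type} [CommRing A] [Algebra ℝ A] (hfg : Algebra.FiniteType ℝ A)
    {k m : ℕ} (f : Fin k → A) (h : Fin m → A)
    (hbd : ∃ C : ℝ, ∀ χ ∈ KSet (Set.range f), ∀ j : Fin m, |χ (h j)| ≤ C)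
    (hfib : ∀ lam : Fin m → ℝ,
      (∃ χ ∈ KSet (Set.range f), ∀ j : Fin m, χ (h j) = lam j) →
      ∃ (B : MPAlgebra)
        (ρ : B.carrier →ₐ[ℝ]
          (A ⧸ Ideal.span (Set.range fun j : Fin m => h j - algebraMap ℝ A (lam j)))),
        Function.Surjective ρ) :
    ∀ L : A →ₗ[ℝ] ℝ, (∀ a : A, IsInPreordering (Set.range f) a → 0 ≤ L a) →
      IsMomentFunctional L := by
  intro L hL
  exact haviland hfg L (fun p hp => nonneg_of_fibres hfg f h hbd hfib L hL p hp)
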